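/- arXiv:2106.03726 — 2 statements merged into one kernel-verified Lean document; each statement's English description precedes it below -/
import Mathlib

section
/- Let d ≥ 3 and let q_1, …, q_d be pairwise coprime positive integers. Assume the Γ-periodic potentials V, Y : ℤ^d → ℝ are Fermi isospectral and that Y = ⊕_{j=1}^d Y_j is completely separable (i.e., (1,1,…,1) separable, with each Y_j a function of the single variable n_j). Then V = ⊕_{j=1}^d V_j is completely separable, and for each j = 1,…,d there exists a constant C_j ∈ ℝ such that V_j + C_j and Y_j are Floquet isospectral as q_jℤ-periodic potentials on ℤ. -/
open scoped BigOperators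
open Complex

noncomputable section

/-- The fundamental domain `W` for `Γ = q₁ℤ ⊕ ⋯ ⊕ q_dℤ`, as a type. -/
abbrev Cell (d : ℕ) (q : Fin d → ℕ) := (j : Fin d) → Fin (q j)

/-- `V : ℤ^d → ℝ` is `Γ`-periodic for `Γ = q₁ℤ ⊕ ⋯ ⊕ q_dℤ`. -/
def IsPeriodicPotential (d : ℕ) (q : Fin d → ℕ) (V : (Fin d → ℤ) → ℝ) : Prop :=
  ∀ n γ : Fin d → ℤ, (∀ j, (q j : ℤ) ∣ γ j) → V (n + γ) = V n

/-- The discrete Fourier transform `V̂(l)`, defined for all `l ∈ ℤ^d`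
(it is automatically `Γ`-periodic in `l`). -/
def dft (d : ℕ) (q : Fin d → ℕ) (V : (Fin d → ℤ) → ℝ) (l : Fin d → ℤ) : ℂ :=
  (1 / ∏ j, (q j : ℂ)) *
    ∑ n : Cell d q, (V (fun j => ((n j : ℕ) : ℤ)) : ℂ) *
      Complex.exp (-(2 * Real.pi * Complex.I) * ∑ j, (l j : ℂ) * ((n j : ℕ) : ℂ) / (q j : ℂ))

/-- `ρ^j_m = e^{2πi m/q_j}`. -/
def rho (d : ℕ) (q : Fin d → ℕ) (j : Fin d) (m : ℤ) : ℂ :=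
  Complex.exp (2 * Real.pi * Complex.I * (m : ℂ) / (q j : ℂ))

/-- The Floquet matrix `M_V(z)` (the matrix `A + B_V` of Lemma 2.7). -/
def floquetMatrix (d : ℕ) (q : Fin d → ℕ) (V : (Fin d → ℤ) → ℝ) (z : Fin d → ℂ) :
    Matrix (Cell d q) (Cell d q) ℂ := fun n n' =>
  (if n = n' then ∑ j, (rho d q j (n j : ℕ) * z j + (rho d q j (n j : ℕ) * z j)⁻¹) else 0)
    + dft d q V (fun j => ((n j : ℕ) : ℤ) - ((n' j : ℕ) : ℤ))

/-- `P̃_V(z, λ) = det (M_V(z) − λ I)`. -/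
def floquetDet (d : ℕ) (q : Fin d → ℕ) (V : (Fin d → ℤ) → ℝ) (z : Fin d → ℂ) (lam : ℂ) : ℂ :=
  Matrix.det (floquetMatrix d q V z - lam • (1 : Matrix (Cell d q) (Cell d q) ℂ))

/-- `V` and `Y` are Fermi isospectral. -/
def FermiIsospectral (d : ℕ) (q : Fin d → ℕ) (V Y : (Fin d → ℤ) → ℝ) : Prop :=
  ∃ lam0 : ℂ,
    {z : Fin d → ℂ | (∀ j, z j ≠ 0) ∧ floquetDet d q V z lam0 = 0}
      = {z : Fin d → ℂ | (∀ j, z j ≠ 0) ∧ floquetDet d q Y z lam0 = 0}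

/-- `V` and `Y` are Floquet isospectral. -/
def FloquetIsospectral (d : ℕ) (q : Fin d → ℕ) (V Y : (Fin d → ℤ) → ℝ) : Prop :=
  ∀ z : Fin d → ℂ, (∀ j, z j ≠ 0) → ∀ lam : ℂ,
    floquetDet d q V z lam = floquetDet d q Y z lam

/-- The average `[V]` of `V` over one periodicity cell. -/
def potentialAvg (d : ℕ) (q : Fin d → ℕ) (V : (Fin d → ℤ) → ℝ) : ℝ :=
  (1 / ∏ j, (q j : ℝ)) * ∑ n : Cell d q, V (fun j => ((n j : ℕ) : ℤ))

/-- The embedding of the `j`-th block of coordinates into `Fin d`,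
given block sizes `D : Fin r → ℕ` with `∑ j, D j = d`. -/
def blockEmbed {r d : ℕ} (D : Fin r → ℕ) (hsum : ∑ j, D j = d) (j : Fin r) (i : Fin (D j)) :
    Fin d :=
  ⟨(∑ k ∈ Finset.univ.filter (fun k => k < j), D k) + i.1, by
    have hj : j ∉ Finset.univ.filter (fun k => k < j) := by simp
    have h2 : (∑ k ∈ Finset.univ.filter (fun k => k < j), D k) + D j ≤ ∑ k, D k := by
      calc (∑ k ∈ Finset.univ.filter (fun k => k < j), D k) + D j
          = ∑ k ∈ insert j (Finset.univ.filter (fun k => k < j)), D k := by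
            rw [Finset.sum_insert hj, add_comm]
        _ ≤ ∑ k, D k := Finset.sum_le_sum_of_subset (Finset.subset_univ _)
    have h3 := i.2
    omega⟩

/-- `V` is `(D 0, …, D (r-1))` separable. -/
def IsSeparablePotential {r : ℕ} (d : ℕ) (D : Fin r → ℕ) (hsum : ∑ j, D j = d)
    (V : (Fin d → ℤ) → ℝ) : Prop :=
  ∃ Vj : (j : Fin r) → (Fin (D j) → ℤ) → ℝ,
    ∀ n : Fin d → ℤ, V n = ∑ j, Vj j (fun i => n (blockEmbed D hsum j i))

/-!
Along a curve `z = ε⁻¹ • y(ε)` on the Fermi variety with `y(0) = z₀` on the hyperplane `∑ z_j = 0`,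
second order perturbation theory for the diagonal entry at `l = 0` shows that
`∑_{l ≠ 0} |V̂(l)|² / ∑_j ρ^j_{l_j} z₀_j` is the same for `V` and `Y`. As the periods are coprime
and `d ≥ 3`, for `l` with two nonzero coordinates the pole hyperplane `∑_j ρ^j_{l_j} z₀_j = 0` is
not shared by any other term, so `|V̂(l)| = |Ŷ(l)|`. For separable `Y` these coefficients vanish,
hence `V` is separable too.

The Floquet matrix of a separable potential is a Kronecker sum, and the one-dimensional
determinants are, up to sign, `f_j(x)` for `V_j` and `g_j(x)` for `Y_j` plus the same term
depending on `z_j` only, where `f_j` and `g_j` are the characteristic polynomials at `z_j = 1`. So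
whenever `∑ s_j = λ₀` there are `x_j` with `∑ x_j = λ₀` and `g_j(x_j) = f_j(s_j)`. Letting
`s_a → ∞` and `s_b → -∞` with the other `s_j` fixed, coprimality of the degrees forces `x_a - s_a`
and `x_b - s_b` to converge to constants, so that the other shifts `x_j - s_j` are constant and
`f_j(s) = g_j(s + c_j)`. Comparing traces, `c_j` is real.
-/

namespace FermiRigidity

open Filter Topology Polynomial
open scoped Function

section BorderedMatrix

variable {ι K : Type*} [DecidableEq ι] [Field K]

/-- The matrix `diagonal D + B` with every row other than `o` multiplied by `ε` and the column `o`
divided by `ε`, written with `p = (D o + B o o) / ε` and `h = ε • D` as independent parameters, so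
that it makes sense at `ε = 0`. -/
def borderedMatrix (o : ι) (B : Matrix ι ι K) (ε p : K) (h : ι → K) : Matrix ι ι K :=
  fun n n' =>
    if n = o then if n' = o then p else B o n'
    else if n' = o then B n o else ε * B n n' + if n = n' then h n else 0

variable [Fintype ι] {o : ι} (B : Matrix ι ι K)

theorem det_borderedMatrix_zero (p : K) {h : ι → K} (hh : ∀ n, n ≠ o → h n ≠ 0) :
    (borderedMatrix o B 0 p h).det =
      (∏ n ∈ Finset.univ.erase o, h n) *
        (p - ∑ n ∈ Finset.univ.erase o, B o n * B n o / h n) := by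
  let h' : {n // n ≠ o} → K := fun n => h n
  have diagonal_block : (borderedMatrix o B 0 p h).toBlock (· ≠ o) (· ≠ o) =
      Matrix.diagonal h' := by
    ext ⟨i, hi⟩ ⟨j, hj⟩
    simp [Matrix.toBlock_apply, borderedMatrix, hi, hj, Matrix.diagonal_apply, h']
  have h'_unit : IsUnit h' := Pi.isUnit_iff.mpr fun n => (hh n n.2).isUnit
  have h'_inv (n) : Ring.inverse h' n = (h n)⁻¹ :=
    eq_inv_of_mul_eq_one_left (congr_fun (Ring.inverse_mul_cancel _ h'_unit) n)
  have mem_erase (n : ι) : n ∈ Finset.univ.erase o ↔ n ≠ o := by simp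
  have prod_erase := Finset.prod_subtype (F := inferInstance) _ mem_erase h
  have sum_erase :=
    Finset.sum_subtype (F := inferInstance) _ mem_erase fun n => B o n * B n o / h n
  let := h'_unit.invertible
  let := Matrix.diagonalInvertible h'
  let : Unique {n // ¬ n ≠ o} := ⟨⟨⟨o, by simp⟩⟩, fun x => Subtype.ext (not_not.mp x.2)⟩
  have default_eq : ((default : {n // ¬ n ≠ o}) : ι) = o := rfl
  rw [Matrix.det_toBlock _ (· ≠ o), diagonal_block, Matrix.det_fromBlocks₁₁, Matrix.det_diagonal,
    Matrix.det_unique, Matrix.sub_apply, Matrix.mul_apply, Matrix.invOf_eq_nonsing_inv,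
    Matrix.inv_diagonal, prod_erase, sum_erase]
  congr 2
  · simp [Matrix.toBlock_apply, borderedMatrix, default_eq]
  · refine Finset.sum_congr rfl fun n _ => ?_
    simp only [Matrix.mul_diagonal, h'_inv, Matrix.toBlock_apply, borderedMatrix, default_eq, n.2,
      if_true, if_false]
    rw [div_eq_mul_inv]
    ring

theorem det_borderedMatrix_eq_add_mul (ε p : K) (h : ι → K) :
    (borderedMatrix o B ε p h).det = (borderedMatrix o B ε 0 h).det +
      p * ((borderedMatrix o B ε 1 h).det - (borderedMatrix o B ε 0 h).det) := by
  have row (p : K) : borderedMatrix o B ε p h = (borderedMatrix o B ε 0 h).updateRow o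
      (borderedMatrix o B ε 0 h o + p • Pi.single o 1) := by
    ext i j
    rcases eq_or_ne i o with rfl | hi
    · rcases eq_or_ne j i with rfl | hj <;> simp [borderedMatrix, *]
    · simp [borderedMatrix, hi]
  rw [row p, row 1]
  simp only [Matrix.det_updateRow_add, Matrix.det_updateRow_smul, Matrix.updateRow_eq_self]
  ring

theorem det_borderedMatrix_eq_zero_iff {ε : K} (hε : ε ≠ 0) (D : ι → K) :
    (borderedMatrix o B ε ((D o + B o o) / ε) (ε • D)).det = 0 ↔
      (Matrix.diagonal D + B).det = 0 := by
  have rescale : borderedMatrix o B ε ((D o + B o o) / ε) (ε • D) =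
      Matrix.diagonal (fun n => if n = o then 1 else ε) * (Matrix.diagonal D + B) *
        Matrix.diagonal (fun n => if n = o then ε⁻¹ else 1) := by
    ext i j
    rw [Matrix.mul_diagonal, Matrix.diagonal_mul]
    by_cases hi : i = o <;> by_cases hj : j = o <;> by_cases hij : i = j <;>
      simp_all [borderedMatrix, div_eq_mul_inv, mul_add, add_comm, mul_comm _ ε⁻¹]
  have left_ne : ∏ i, (if i = o then 1 else ε) ≠ 0 :=
    Finset.prod_ne_zero_iff.mpr fun i _ => by split_ifs <;> simp [hε]
  have right_ne : ∏ i, (if i = o then ε⁻¹ else 1) ≠ 0 :=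
    Finset.prod_ne_zero_iff.mpr fun i _ => by split_ifs <;> simp [hε]
  rw [rescale, Matrix.det_mul, Matrix.det_mul, Matrix.det_diagonal, Matrix.det_diagonal,
    mul_eq_zero_iff_right right_ne, mul_eq_zero_iff_left left_ne]

end BorderedMatrix

section Perturbation

variable {ι 𝕜 : Type*} [DecidableEq ι] [Fintype ι] [NontriviallyNormedField 𝕜]
  (B : Matrix ι ι 𝕜) {o : ι} {h : ι → 𝕜}

theorem continuous_det_borderedMatrix (p : 𝕜) :
    Continuous fun x : 𝕜 × (ι → 𝕜) => (borderedMatrix o B x.1 p x.2).det := by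
  refine Continuous.matrix_det (continuous_matrix fun i j => ?_)
  unfold borderedMatrix
  split_ifs <;> fun_prop

/-- Second order perturbation theory: the rescaled determinant is affine in this quotient. -/
theorem tendsto_div_of_det_diagonal_add_eq_zero {α : Type*} {l : Filter α} {ε : α → 𝕜}
    {D : α → ι → 𝕜} (hε : Tendsto ε l (𝓝 0)) (hε_ne : ∀ᶠ x in l, ε x ≠ 0)
    (hD : ∀ n, n ≠ o → Tendsto (fun x => ε x * D x n) l (𝓝 (h n))) (hh : ∀ n, n ≠ o → h n ≠ 0)
    (hdet : ∀ᶠ x in l, (Matrix.diagonal (D x) + B).det = 0) :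
    Tendsto (fun x => (D x o + B o o) / ε x) l
      (𝓝 (∑ n ∈ Finset.univ.erase o, B o n * B n o / h n)) := by
  set P := ∏ n ∈ Finset.univ.erase o, h n
  set S := ∑ n ∈ Finset.univ.erase o, B o n * B n o / h n
  have hP : P ≠ 0 := Finset.prod_ne_zero_iff.mpr fun n hn => hh n (Finset.ne_of_mem_erase hn)
  let f (p : 𝕜) (x : α) : 𝕜 := (borderedMatrix o B (ε x) p (ε x • D x)).det
  have tendsto_f (p : 𝕜) : Tendsto (f p) l (𝓝 (P * (p - S))) := by
    have tendsto_update : Tendsto (fun x => Function.update (ε x • D x) o (h o)) l (𝓝 h) :=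
      tendsto_pi_nhds.mpr fun n => by
        rcases eq_or_ne n o with rfl | hn
        · simpa using tendsto_const_nhds
        · simpa [hn] using hD n hn
    have h_ignored (h' : ι → 𝕜) (a ε : 𝕜) :
        borderedMatrix o B ε p (Function.update h' o a) = borderedMatrix o B ε p h' := by
      ext i j
      by_cases hi : i = o <;> simp [borderedMatrix, hi]
    rw [← det_borderedMatrix_zero B p hh]
    simpa only [Function.comp_def, h_ignored] using
      ((continuous_det_borderedMatrix B (o := o) p).tendsto (0, h)).comp
        (hε.prodMk_nhds tendsto_update)
  have tendsto_slope : Tendsto (fun x => f 1 x - f 0 x) l (𝓝 P) := by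
    simpa [mul_sub] using (tendsto_f 1).sub (tendsto_f 0)
  have tendsto_root : Tendsto (fun x => -f 0 x / (f 1 x - f 0 x)) l (𝓝 S) := by
    simpa [hP, Pi.div_def] using (tendsto_f 0).neg.div tendsto_slope hP
  refine tendsto_root.congr' ?_
  filter_upwards [hε_ne, hdet, tendsto_slope.eventually_ne hP] with x hx hdet_x slope_ne
  rw [← det_borderedMatrix_eq_zero_iff (o := o) B hx, det_borderedMatrix_eq_add_mul] at hdet_x
  rw [div_eq_iff slope_ne]
  linear_combination -hdet_x

theorem exists_implicit_curve [CompleteSpace 𝕜] {f : 𝕜 × 𝕜 → 𝕜} {f' : 𝕜 × 𝕜 →L[𝕜] 𝕜} {a b : 𝕜}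
    (hf : HasStrictFDerivAt f f' (a, b)) (hf' : f' (0, 1) ≠ 0) :
    ∃ σ : 𝕜 → 𝕜, Tendsto σ (𝓝 a) (𝓝 b) ∧ ∀ᶠ x in 𝓝 a, f (x, σ x) = f (a, b) := by
  have invertible : (f' ∘L .inr 𝕜 𝕜 𝕜).IsInvertible := by
    refine ⟨ContinuousLinearEquiv.unitsEquivAut 𝕜 (Units.mk0 _ hf'), ?_⟩
    ext
    simp
  exact ⟨hf.implicitFunctionOfProdDomain invertible,
    hf.tendsto_implicitFunctionOfProdDomain invertible,
    hf.eventually_apply_implicitFunctionOfProdDomain invertible⟩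

theorem contDiffAt_det {E : Type*} [NormedAddCommGroup E] [NormedSpace 𝕜 E] {k : WithTop ℕ∞}
    {A : E → Matrix ι ι 𝕜} {x : E} (hA : ∀ i j, ContDiffAt 𝕜 k (fun y => A y i j) x) :
    ContDiffAt 𝕜 k (fun y => (A y).det) x := by
  simp only [Matrix.det_apply']
  exact ContDiffAt.sum fun σ _ => contDiffAt_const.mul (contDiffAt_prod fun i _ => hA _ _)

end Perturbation

section DispersionRelation

variable {ι J : Type*} [Fintype J]

/-- The diagonal of a Floquet matrix without potential; `ph n j` are the Bloch phases. -/
def dispersion (ph : ι → J → ℂ) (z : J → ℂ) (n : ι) : ℂ :=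
  ∑ j, (ph n j * z j + (ph n j * z j)⁻¹)

/-- The function `ε * dispersion ph (ε⁻¹ • y) n`, extended to `ε = 0`. -/
def scaledDispersion (ph : ι → J → ℂ) (ε : ℂ) (y : J → ℂ) (n : ι) : ℂ :=
  ∑ j, (ph n j * y j + ε ^ 2 * (ph n j * y j)⁻¹)

variable (ph : ι → J → ℂ)

theorem scaledDispersion_zero (y : J → ℂ) (n : ι) :
    scaledDispersion ph 0 y n = ∑ j, ph n j * y j := by
  simp [scaledDispersion]

theorem mul_dispersion_inv_smul {ε : ℂ} (hε : ε ≠ 0) (y : J → ℂ) (n : ι) :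
    ε * dispersion ph (ε⁻¹ • y) n = scaledDispersion ph ε y n := by
  rw [dispersion, Finset.mul_sum]
  refine Finset.sum_congr rfl fun j _ => ?_
  simp only [Pi.smul_apply, smul_eq_mul, mul_inv, inv_inv]
  field_simp

theorem contDiffAt_scaledDispersion {n : ι} (hn : ∀ j, ph n j ≠ 0) {x : ℂ × (J → ℂ)}
    (hx : ∀ j, x.2 j ≠ 0) :
    ContDiffAt ℂ 1 (fun x : ℂ × (J → ℂ) => scaledDispersion ph x.1 x.2 n) x := by
  refine ContDiffAt.sum fun j _ => ContDiffAt.add (by fun_prop) (ContDiffAt.mul (by fun_prop) ?_)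
  exact ContDiffAt.inv (by fun_prop) (mul_ne_zero (hn j) (hx j))

variable {ph} {z₀ : J → ℂ}

theorem tendsto_mul_dispersion_sub {y : ℂ → J → ℂ} (hy : Tendsto y (𝓝[≠] 0) (𝓝 z₀))
    (hz₀ : ∀ j, z₀ j ≠ 0) {n : ι} (hn : ∀ j, ph n j ≠ 0) (c : ℂ) :
    Tendsto (fun ε => ε * (dispersion ph (ε⁻¹ • y ε) n - c)) (𝓝[≠] 0)
      (𝓝 (∑ j, ph n j * z₀ j)) := by
  have tendsto_id₀ : Tendsto id (𝓝[≠] (0 : ℂ)) (𝓝 0) := nhdsWithin_le_nhds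
  have scaled : Tendsto (fun ε => scaledDispersion ph ε (y ε) n - ε * c) (𝓝[≠] 0)
      (𝓝 (scaledDispersion ph 0 z₀ n - 0 * c)) :=
    (Tendsto.comp (g := fun x : ℂ × (J → ℂ) => scaledDispersion ph x.1 x.2 n)
      (contDiffAt_scaledDispersion ph hn (x := (0, z₀)) hz₀).continuousAt
      (tendsto_id₀.prodMk_nhds hy)).sub (tendsto_id₀.mul_const c)
  rw [scaledDispersion_zero, zero_mul, sub_zero] at scaled
  refine scaled.congr' ?_
  filter_upwards [self_mem_nhdsWithin] with ε hε
  rw [mul_sub, mul_dispersion_inv_smul ph hε]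

variable [Fintype ι] [DecidableEq ι] {o : ι}

theorem det_borderedMatrix_scaledDispersion_eq_zero_iff (ho : ∀ j, ph o j = 1)
    (B : Matrix ι ι ℂ) {lam ε s : ℂ} (hε : ε ≠ 0) {y : J → ℂ}
    (hy : ∑ j, y j = ε * (lam - B o o + ε * s)) :
    (borderedMatrix o B ε (s + ∑ j, (y j)⁻¹)
        fun n => scaledDispersion ph ε y n - ε * lam).det = 0 ↔
      (Matrix.diagonal (fun n => dispersion ph (ε⁻¹ • y) n - lam) + B).det = 0 := by
  have diagonal_entry : dispersion ph (ε⁻¹ • y) o - lam + B o o = (s + ∑ j, (y j)⁻¹) * ε := by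
    simp only [dispersion, ho, one_mul, Pi.smul_apply, smul_eq_mul, mul_inv, inv_inv,
      Finset.sum_add_distrib, ← Finset.mul_sum, hy]
    field_simp
    ring
  have scaled : (fun n => scaledDispersion ph ε y n - ε * lam) =
      ε • fun n => dispersion ph (ε⁻¹ • y) n - lam := by
    funext n
    simp [mul_sub, mul_dispersion_inv_smul ph hε]
  rw [← det_borderedMatrix_eq_zero_iff B hε, scaled, diagonal_entry, mul_div_cancel_right₀ _ hε]

/-- At `ε = 0` the determinant is affine in the second-order parameter `s` of the family `y (ε, s)`,
so its zero continues to small `ε`. -/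
theorem exists_implicit_curve_borderedMatrix {y : ℂ × ℂ → J → ℂ} (hy : ContDiff ℂ 1 y)
    (hy_zero : ∀ s, y (0, s) = z₀) (hph : ∀ n j, ph n j ≠ 0) (B : Matrix ι ι ℂ) (lam : ℂ)
    (hz₀ : ∀ j, z₀ j ≠ 0) (hz₀_ph : ∀ n, n ≠ o → ∑ j, ph n j * z₀ j ≠ 0) :
    ∃ (s : ℂ) (σ : ℂ → ℂ), Tendsto σ (𝓝 0) (𝓝 s) ∧ ∀ᶠ ε in 𝓝 0,
      (borderedMatrix o B ε (σ ε + ∑ j, (y (ε, σ ε) j)⁻¹)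
        fun n => scaledDispersion ph ε (y (ε, σ ε)) n - ε * lam).det = 0 := by
  let K (x : ℂ × ℂ) : ℂ := (borderedMatrix o B x.1 (x.2 + ∑ j, (y x j)⁻¹)
    fun n => scaledDispersion ph x.1 (y x) n - x.1 * lam).det
  set P := ∏ n ∈ Finset.univ.erase o, ∑ j, ph n j * z₀ j
  have hP : P ≠ 0 := Finset.prod_ne_zero_iff.mpr fun n hn => hz₀_ph n (Finset.ne_of_mem_erase hn)
  obtain ⟨s, K_zero⟩ : ∃ s, ∀ t, K (0, t) = P * (t - s) := by
    refine ⟨∑ n ∈ Finset.univ.erase o, B o n * B n o / ∑ j, ph n j * z₀ j - ∑ j, (z₀ j)⁻¹,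
      fun t => ?_⟩
    simp only [K, hy_zero, scaledDispersion_zero, zero_mul, sub_zero]
    rw [det_borderedMatrix_zero B _ hz₀_ph]
    ring
  have y_ne (j : J) : y (0, s) j ≠ 0 := by simpa [hy_zero] using hz₀ j
  have y_contDiffAt (j : J) : ContDiffAt ℂ 1 (fun x => y x j) (0, s) :=
    (contDiff_pi.mp hy j).contDiffAt
  have K_contDiffAt : ContDiffAt ℂ 1 K (0, s) := by
    refine contDiffAt_det fun i j => ?_
    have scaled_contDiffAt : ContDiffAt ℂ 1 (fun x => scaledDispersion ph x.1 (y x) i) (0, s) :=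
      ContDiffAt.comp (g := fun x : ℂ × (J → ℂ) => scaledDispersion ph x.1 x.2 i) (0, s)
        (contDiffAt_scaledDispersion ph (hph i) y_ne) (contDiffAt_fst.prodMk hy.contDiffAt)
    have inv_contDiffAt : ContDiffAt ℂ 1 (fun x => ∑ j, (y x j)⁻¹) (0, s) :=
      ContDiffAt.sum fun j _ => (y_contDiffAt j).inv (y_ne j)
    unfold borderedMatrix
    split_ifs <;> fun_prop
  have K_strict := K_contDiffAt.hasStrictFDerivAt one_ne_zero
  have K_deriv : fderiv ℂ K (0, s) (0, 1) = P := by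
    have along_line : HasDerivAt (fun t => K (0, t)) (fderiv ℂ K (0, s) (0, 1)) s :=
      K_strict.hasFDerivAt.comp_hasDerivAt s ((hasDerivAt_const s 0).prodMk (hasDerivAt_id s))
    refine along_line.unique ?_
    simpa only [K_zero, mul_one, id] using ((hasDerivAt_id s).sub_const s).const_mul P
  obtain ⟨σ, hσ, K_σ⟩ := exists_implicit_curve K_strict (K_deriv.symm ▸ hP)
  exact ⟨s, σ, hσ, K_σ.mono fun ε hε => hε.trans (by simp [K_zero])⟩

theorem exists_asymptotic_curve [Nonempty J] (hph : ∀ n j, ph n j ≠ 0) (ho : ∀ j, ph o j = 1)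
    (B : Matrix ι ι ℂ) (lam : ℂ) (hz₀ : ∀ j, z₀ j ≠ 0) (hz₀_sum : ∑ j, z₀ j = 0)
    (hz₀_ph : ∀ n, n ≠ o → ∑ j, ph n j * z₀ j ≠ 0) :
    ∃ y : ℂ → J → ℂ, Tendsto y (𝓝 0) (𝓝 z₀) ∧ ∀ᶠ ε in 𝓝[≠] 0,
      (Matrix.diagonal (fun n => dispersion ph (ε⁻¹ • y ε) n - lam) + B).det = 0 := by
  classical
  let y (x : ℂ × ℂ) : J → ℂ :=
    z₀ + Pi.single (Classical.arbitrary J) (x.1 * (lam - B o o + x.1 * x.2))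
  have y_zero (s : ℂ) : y (0, s) = z₀ := by simp [y]
  have y_sum (x : ℂ × ℂ) : ∑ j, y x j = x.1 * (lam - B o o + x.1 * x.2) := by
    simp [y, Finset.sum_add_distrib, hz₀_sum]
  have y_contDiff : ContDiff ℂ 1 y := contDiff_const.add (contDiff_pi.mpr fun j => by
    simp only [Pi.single_apply]; split_ifs <;> fun_prop)
  obtain ⟨s, σ, hσ, hdet⟩ :=
    exists_implicit_curve_borderedMatrix (o := o) y_contDiff y_zero hph B lam hz₀ hz₀_ph
  refine ⟨fun ε => y (ε, σ ε), ?_, ?_⟩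
  · exact y_zero s ▸ (y_contDiff.continuous.tendsto (0, s)).comp (tendsto_id.prodMk_nhds hσ)
  · filter_upwards [hdet.filter_mono nhdsWithin_le_nhds, self_mem_nhdsWithin] with ε hε ε_ne
    exact (det_borderedMatrix_scaledDispersion_eq_zero_iff ho B ε_ne (y_sum _)).mp hε

theorem sum_div_eq_of_det_imp [Nonempty J] (hph : ∀ n j, ph n j ≠ 0) (ho : ∀ j, ph o j = 1)
    {B₁ B₂ : Matrix ι ι ℂ} {lam : ℂ}
    (hdet : ∀ z : J → ℂ, (∀ j, z j ≠ 0) →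
      (Matrix.diagonal (fun n => dispersion ph z n - lam) + B₁).det = 0 →
      (Matrix.diagonal (fun n => dispersion ph z n - lam) + B₂).det = 0)
    (hz₀ : ∀ j, z₀ j ≠ 0) (hz₀_sum : ∑ j, z₀ j = 0)
    (hz₀_ph : ∀ n, n ≠ o → ∑ j, ph n j * z₀ j ≠ 0) :
    ∑ n ∈ Finset.univ.erase o, B₁ o n * B₁ n o / (∑ j, ph n j * z₀ j) =
      ∑ n ∈ Finset.univ.erase o, B₂ o n * B₂ n o / (∑ j, ph n j * z₀ j) := by
  obtain ⟨y, hy, hdet₁⟩ := exists_asymptotic_curve hph ho B₁ lam hz₀ hz₀_sum hz₀_ph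
  replace hy : Tendsto y (𝓝[≠] 0) (𝓝 z₀) := hy.mono_left nhdsWithin_le_nhds
  have tendsto_id₀ : Tendsto id (𝓝[≠] (0 : ℂ)) (𝓝 0) := nhdsWithin_le_nhds
  have ε_ne : ∀ᶠ ε : ℂ in 𝓝[≠] 0, ε ≠ 0 := self_mem_nhdsWithin
  have y_ne : ∀ᶠ ε in 𝓝[≠] 0, ∀ j, y ε j ≠ 0 :=
    eventually_all.mpr fun j => (tendsto_pi_nhds.mp hy j).eventually_ne (hz₀ j)
  have hdet₂ : ∀ᶠ ε in 𝓝[≠] 0,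
      (Matrix.diagonal (fun n => dispersion ph (ε⁻¹ • y ε) n - lam) + B₂).det = 0 := by
    filter_upwards [hdet₁, ε_ne, y_ne] with ε hε ε_ne y_ne
    exact hdet _ (fun j => mul_ne_zero (inv_ne_zero ε_ne) (y_ne j)) hε
  have limit₁ := tendsto_div_of_det_diagonal_add_eq_zero B₁ tendsto_id₀ ε_ne
    (fun n _ => tendsto_mul_dispersion_sub hy hz₀ (hph n) lam) hz₀_ph hdet₁
  have limit₂ := tendsto_div_of_det_diagonal_add_eq_zero B₂ tendsto_id₀ ε_ne
    (fun n _ => tendsto_mul_dispersion_sub hy hz₀ (hph n) lam) hz₀_ph hdet₂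
  have diff_limit : Tendsto (fun ε : ℂ => (B₁ o o - B₂ o o) / ε) (𝓝[≠] 0) (𝓝 _) :=
    (limit₁.sub limit₂).congr fun ε => by simp only [id]; ring
  have diag_eq : B₁ o o - B₂ o o = 0 := by
    refine tendsto_nhds_unique (tendsto_const_nhds.congr' ?_)
      ((tendsto_id₀.mul diff_limit).trans (by rw [zero_mul]))
    filter_upwards [ε_ne] with ε hε
    exact (mul_div_cancel₀ _ hε).symm
  simp only [diag_eq, zero_div] at diff_limit
  exact sub_eq_zero.mp (tendsto_nhds_unique diff_limit tendsto_const_nhds)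

end DispersionRelation

section PartialFractions

variable {ι K E : Type*} [Field K] [Infinite K] [AddCommGroup E] [Module K E]

theorem eq_zero_of_sum_div_dual_eq_zero [Fintype ι] {φ : ι → Module.Dual K E} {W : Submodule K E}
    {a : ι → K} (hsum : ∀ z ∈ W, (∀ n, φ n z ≠ 0) → ∑ n, a n / φ n z = 0) {l : ι}
    (hl : ∃ z ∈ W, φ l z ≠ 0) (hφ : ∀ n, n ≠ l → ∃ z ∈ W, φ l z = 0 ∧ φ n z ≠ 0) : a l = 0 := by
  classical
  obtain ⟨r, hrW, hr⟩ := hl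
  obtain ⟨p, ⟨hpW, hpl⟩, hp⟩ := Module.Dual.exists_forall_mem_ne_zero_of_forall_exists
    (W ⊓ LinearMap.ker (φ l)) (fun n : {n // n ≠ l} => φ n) fun n =>
      let ⟨z, hzW, hzl, hzn⟩ := hφ n n.2
      ⟨z, ⟨hzW, hzl⟩, hzn⟩
  -- the forms restricted to the line `p + X r`, along which only `φ l` vanishes at `X = 0`
  let c (n : ι) : K[X] := C (φ n p) + C (φ n r) * X
  have c_eval (n : ι) (t : K) : (c n).eval t = φ n (p + t • r) := by
    simp only [c, eval_add, eval_mul, eval_C, eval_X, map_add, map_smul, smul_eq_mul, mul_comm t]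
  have c_ne_zero (n : ι) : c n ≠ 0 := by
    rcases eq_or_ne n l with rfl | hn
    · exact fun h => hr (by simpa [h, LinearMap.mem_ker.mp hpl] using (c_eval n 1).symm)
    · exact fun h => hp ⟨n, hn⟩ (by simpa [h] using (c_eval n 0).symm)
  let F : K[X] := ∑ n, C (a n) * ∏ m ∈ Finset.univ.erase n, c m
  have F_eq_zero : F = 0 := by
    refine (mul_eq_zero.mp (funext fun t => ?_ : F * ∏ n, c n = 0)).resolve_right
      (Finset.prod_ne_zero_iff.mpr fun n _ => c_ne_zero n)
    rw [eval_mul, eval_prod, eval_zero, mul_eq_zero, or_iff_not_imp_right]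
    intro ht
    have c_eval_ne (n : ι) : φ n (p + t • r) ≠ 0 :=
      c_eval n t ▸ Finset.prod_ne_zero_iff.mp ht n (Finset.mem_univ n)
    calc F.eval t = (∏ n, φ n (p + t • r)) * ∑ n, a n / φ n (p + t • r) := by
          simp only [F, eval_finsetSum, eval_mul, eval_C, eval_prod, c_eval, Finset.mul_sum]
          refine Finset.sum_congr rfl fun n _ => ?_
          rw [← Finset.mul_prod_erase _ _ (Finset.mem_univ n)]
          rw [mul_comm (φ n _), mul_assoc, mul_div_cancel₀ _ (c_eval_ne n), mul_comm]
      _ = 0 := by rw [hsum _ (W.add_mem hpW (W.smul_mem t hrW)) c_eval_ne, mul_zero]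
  have F_eval_zero : F.eval 0 = a l * ∏ m ∈ Finset.univ.erase l, φ m p := by
    simp only [F, eval_finsetSum, eval_mul, eval_C, eval_prod, c_eval, zero_smul, add_zero]
    refine Fintype.sum_eq_single l fun n hn => ?_
    rw [Finset.prod_eq_zero (f := fun m => φ m p)
      (Finset.mem_erase.mpr ⟨hn.symm, Finset.mem_univ l⟩) (LinearMap.mem_ker.mp hpl), mul_zero]
  rw [F_eq_zero, eval_zero, eq_comm, mul_eq_zero] at F_eval_zero
  exact F_eval_zero.resolve_right
    (Finset.prod_ne_zero_iff.mpr fun m hm => hp ⟨m, Finset.ne_of_mem_erase hm⟩)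

end PartialFractions

section RootsOfUnity

/-- An affine map of the plane taking three points of the unit circle to the unit circle is a
rotation or constant: the points satisfy a quadratic equation with leading coefficient
`β * conj α`. -/
theorem eq_zero_or_eq_zero_of_norm_add_mul_eq_one {α β A B C : ℂ} (hAB : A ≠ B) (hAC : A ≠ C)
    (hBC : B ≠ C) (hA : ‖A‖ = 1) (hB : ‖B‖ = 1) (hC : ‖C‖ = 1) (hA' : ‖α + β * A‖ = 1)
    (hB' : ‖α + β * B‖ = 1) (hC' : ‖α + β * C‖ = 1) : α = 0 ∨ β = 0 := by
  set a := starRingEnd ℂ α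
  set k := α * a + β * starRingEnd ℂ β - 1
  have quadratic {X : ℂ} (hX : ‖X‖ = 1) (hX' : ‖α + β * X‖ = 1) :
      β * a * X ^ 2 + k * X + α * starRingEnd ℂ β = 0 := by
    have conj_mul {w : ℂ} (hw : ‖w‖ = 1) : w * starRingEnd ℂ w = 1 := by
      simp [Complex.mul_conj, Complex.normSq_eq_norm_sq, hw]
    have h := conj_mul hX'
    simp only [map_add, map_mul] at h
    linear_combination X * h - (α * starRingEnd ℂ β + β * starRingEnd ℂ β * X) * conj_mul hX
  have eqA := quadratic hA hA'
  have slopeB : β * a * (A + B) + k = 0 := mul_left_cancel₀ (sub_ne_zero.mpr hAB)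
    (by linear_combination eqA - quadratic hB hB')
  have slopeC : β * a * (A + C) + k = 0 := mul_left_cancel₀ (sub_ne_zero.mpr hAC)
    (by linear_combination eqA - quadratic hC hC')
  have leading : β * a = 0 := mul_left_cancel₀ (sub_ne_zero.mpr hBC)
    (by linear_combination slopeB - slopeC)
  simpa [a, or_comm] using leading

variable {J M : Type*} [Monoid M] {q : J → ℕ}

theorem ne_of_pow_eq_one_of_coprime (hco : Pairwise (Nat.Coprime on q)) {u : J → M}
    (hu : ∀ j, u j ^ q j = 1) {i m : J} (him : i ≠ m) (hi : u i ≠ 1) : u i ≠ u m :=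
  fun h => hi ((pow_eq_one_iff_of_coprime (hco him)).mp ⟨hu i, h ▸ hu m⟩)

theorem eq_one_or_eq_of_eq_affine (hJ : 3 ≤ ENat.card J) (hq : ∀ j, q j ≠ 0)
    (hco : Pairwise (Nat.Coprime on q)) {u w : J → ℂ} (hu : ∀ j, u j ^ q j = 1)
    (hw : ∀ j, w j ^ q j = 1) {i j : J} (hij : i ≠ j) (hi : u i ≠ 1) (hj : u j ≠ 1) {α β : ℂ}
    (haff : ∀ m, w m = α + β * u m) : w = 1 ∨ w = u := by
  obtain ⟨k, hki, hkj⟩ := ENat.exists_ne_ne_of_three_le hJ i j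
  have norm_u (m : J) : ‖u m‖ = 1 := Complex.norm_eq_one_of_pow_eq_one (hu m) (hq m)
  have norm_w (m : J) : ‖α + β * u m‖ = 1 :=
    haff m ▸ Complex.norm_eq_one_of_pow_eq_one (hw m) (hq m)
  rcases eq_zero_or_eq_zero_of_norm_add_mul_eq_one (ne_of_pow_eq_one_of_coprime hco hu hij hi)
    (ne_of_pow_eq_one_of_coprime hco hu hki.symm hi)
    (ne_of_pow_eq_one_of_coprime hco hu hkj.symm hj) (norm_u i) (norm_u j) (norm_u k)
    (norm_w i) (norm_w j) (norm_w k) with rfl | rfl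
  · have β_pow (m : J) : β ^ q m = 1 := by
      simpa [haff, mul_pow, hu] using hw m
    have β_eq : β = 1 := (pow_eq_one_iff_of_coprime (hco hij)).mp ⟨β_pow i, β_pow j⟩
    exact .inr (_root_.funext fun m => by simp [haff, β_eq])
  · have α_pow (m : J) : α ^ q m = 1 := by simpa [haff] using hw m
    have α_eq : α = 1 := (pow_eq_one_iff_of_coprime (hco hij)).mp ⟨α_pow i, α_pow j⟩
    exact .inl (_root_.funext fun m => by simp [haff, α_eq])

end RootsOfUnity

section PhaseHyperplanes

open Matrix

theorem exists_dotProduct_ne_zero_of_notMem_span {J K : Type*} [Fintype J] [Field K]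
    {u v w : J → K} (hw : w ∉ Submodule.span K {u, v}) :
    ∃ z, u ⬝ᵥ z = 0 ∧ v ⬝ᵥ z = 0 ∧ w ⬝ᵥ z ≠ 0 := by
  classical
  contrapose! hw
  have mem : dotProductEquiv K J w ∈
      Submodule.span K (Set.range ![dotProductEquiv K J u, dotProductEquiv K J v]) :=
    mem_span_of_iInf_ker_le_ker fun z hz => by
      simp only [Submodule.mem_iInf, Fin.forall_fin_two] at hz
      simpa using hw z (by simpa using hz.1) (by simpa using hz.2)
  rw [Matrix.range_cons_cons_empty, Submodule.mem_span_pair] at mem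
  obtain ⟨α, β, h⟩ := mem
  exact Submodule.mem_span_pair.mpr ⟨α, β, (dotProductEquiv K J).injective (by simpa using h)⟩

variable {ι J : Type*} {q : J → ℕ} {ph : ι → J → ℂ} {o : ι}

theorem notMem_span_one_phase (hJ : 3 ≤ ENat.card J) (hq : ∀ j, q j ≠ 0)
    (hco : Pairwise (Nat.Coprime on q)) (hph : ∀ n j, ph n j ^ q j = 1)
    (hinj : Function.Injective ph) (ho : ph o = 1) {l : ι} {i j : J} (hij : i ≠ j)
    (hi : ph l i ≠ 1) (hj : ph l j ≠ 1) {n : ι} (hno : n ≠ o) (hnl : n ≠ l) :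
    ph n ∉ Submodule.span ℂ {1, ph l} := by
  rw [Submodule.mem_span_pair]
  rintro ⟨α, β, h⟩
  rcases eq_one_or_eq_of_eq_affine hJ hq hco (hph l) (hph n) hij hi hj (α := α) (β := β)
    (fun m => by simp [← h]) with h | h
  · exact hno (hinj (h.trans ho.symm))
  · exact hnl (hinj h)

theorem single_notMem_span_one_phase [DecidableEq J] (hJ : 3 ≤ ENat.card J)
    (hco : Pairwise (Nat.Coprime on q)) {u : J → ℂ} (hu : ∀ j, u j ^ q j = 1)
    {i j : J} (hij : i ≠ j) (hi : u i ≠ 1) (hj : u j ≠ 1) (m : J) :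
    Pi.single m 1 ∉ Submodule.span ℂ {1, u} := by
  obtain ⟨a, b, ham, hbm, hab⟩ : ∃ a b, a ≠ m ∧ b ≠ m ∧ u a ≠ u b := by
    obtain ⟨k, hki, hkj⟩ := ENat.exists_ne_ne_of_three_le hJ i j
    by_cases him : i = m
    · exact ⟨j, k, him ▸ hij.symm, him ▸ hki, ne_of_pow_eq_one_of_coprime hco hu hkj.symm hj⟩
    by_cases hjm : j = m
    · exact ⟨i, k, him, hjm ▸ hkj, ne_of_pow_eq_one_of_coprime hco hu hki.symm hi⟩
    · exact ⟨i, j, him, hjm, ne_of_pow_eq_one_of_coprime hco hu hij hi⟩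
  rw [Submodule.mem_span_pair]
  rintro ⟨α, β, h⟩
  have coord (k : J) : α + β * u k = Pi.single (M := fun _ => ℂ) m 1 k := by simp [← h]
  have at_a := coord a
  have at_b := coord b
  simp only [Pi.single_eq_of_ne, ham, hbm, ne_eq, not_false_eq_true] at at_a at_b
  have β_eq : β = 0 := mul_left_cancel₀ (sub_ne_zero.mpr hab) (by linear_combination at_a - at_b)
  have at_m := coord m
  simp [β_eq] at at_a at_m
  simp [at_a] at at_m

variable [Fintype J] [Fintype ι] [DecidableEq ι]

theorem eq_zero_of_sum_div_phase_eq_zero (hJ : 3 ≤ ENat.card J)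
    (hq : ∀ j, q j ≠ 0) (hco : Pairwise (Nat.Coprime on q)) (hph : ∀ n j, ph n j ^ q j = 1)
    (hinj : Function.Injective ph) (ho : ph o = 1) {a : ι → ℂ}
    (hsum : ∀ z : J → ℂ, (∀ j, z j ≠ 0) → ∑ j, z j = 0 →
      (∀ n, n ≠ o → ∑ j, ph n j * z j ≠ 0) →
      ∑ n ∈ Finset.univ.erase o, a n / (∑ j, ph n j * z j) = 0)
    {l : ι} {i j : J} (hij : i ≠ j) (hi : ph l i ≠ 1) (hj : ph l j ≠ 1) : a l = 0 := by
  classical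
  have hlo : l ≠ o := by rintro rfl; exact hi (congrFun ho i)
  let v : {n // n ≠ o} ⊕ J → J → ℂ := Sum.elim (fun n => ph n) fun m => Pi.single m 1
  let a' : {n // n ≠ o} ⊕ J → ℂ := Sum.elim (fun n => a n) 0
  refine eq_zero_of_sum_div_dual_eq_zero (φ := fun n => dotProductEquiv ℂ J (v n)) (a := a')
    (W := LinearMap.ker (dotProductEquiv ℂ J 1)) (l := .inl ⟨l, hlo⟩) ?_ ?_ ?_
  · intro z hz hne
    simp only [LinearMap.mem_ker, dotProductEquiv_apply_apply, one_dotProduct] at hz hne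
    have h := hsum z (fun j => by simpa [v] using hne (.inr j)) hz
      fun n hn => by simpa [v, dotProduct] using hne (.inl ⟨n, hn⟩)
    rw [Finset.sum_subtype (F := inferInstance) _ (p := (· ≠ o)) (by simp)] at h
    simpa [v, a', dotProduct] using h
  · refine ⟨Pi.single i 1 - Pi.single j 1, by simp, ?_⟩
    simpa [v, dotProduct_sub] using sub_ne_zero.mpr (ne_of_pow_eq_one_of_coprime hco (hph l) hij hi)
  · intro n hn
    have notMem : v n ∉ Submodule.span ℂ {1, ph l} := by
      rcases n with ⟨n, hno⟩ | m
      · exact notMem_span_one_phase hJ hq hco hph hinj ho hij hi hj hno fun h =>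
          hn (congrArg _ (Subtype.ext h))
      · exact single_notMem_span_one_phase hJ hco (hph l) hij hi hj m
    obtain ⟨z, hz_one, hz_l, hz_n⟩ := exists_dotProduct_ne_zero_of_notMem_span notMem
    exact ⟨z, by simpa using hz_one, by simpa [v] using hz_l, by simpa using hz_n⟩

theorem mul_eq_mul_of_det_imp (hJ : 3 ≤ ENat.card J)
    (hq : ∀ j, q j ≠ 0) (hco : Pairwise (Nat.Coprime on q)) (hph : ∀ n j, ph n j ^ q j = 1)
    (hinj : Function.Injective ph) (ho : ph o = 1) {B₁ B₂ : Matrix ι ι ℂ} {lam : ℂ}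
    (hdet : ∀ z : J → ℂ, (∀ j, z j ≠ 0) →
      (Matrix.diagonal (fun n => dispersion ph z n - lam) + B₁).det = 0 →
      (Matrix.diagonal (fun n => dispersion ph z n - lam) + B₂).det = 0)
    {l : ι} {i j : J} (hij : i ≠ j) (hi : ph l i ≠ 1) (hj : ph l j ≠ 1) :
    B₁ o l * B₁ l o = B₂ o l * B₂ l o := by
  have : Nonempty J := ⟨i⟩
  have hph_ne (n : ι) (j : J) : ph n j ≠ 0 := fun h => by simpa [h, hq j] using hph n j
  refine sub_eq_zero.mp (eq_zero_of_sum_div_phase_eq_zero hJ hq hco hph hinj ho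
    (a := fun n => B₁ o n * B₁ n o - B₂ o n * B₂ n o) (fun z hz hz_sum hz_ph => ?_) hij hi hj)
  simp only [sub_div, Finset.sum_sub_distrib]
  exact sub_eq_zero.mpr
    (sum_div_eq_of_det_imp hph_ne (fun j => congrFun ho j) hdet hz hz_sum hz_ph)

end PhaseHyperplanes

section Character

/-- The additive character `m ↦ e^{2πi m / q}` of `ℤ`. -/
def character (q : ℕ) : AddChar ℤ ℂ where
  toFun m := Complex.exp (2 * Real.pi * I * m / q)
  map_zero_eq_one' := by simp
  map_add_eq_mul' m n := by
    rw [← Complex.exp_add]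
    push_cast
    ring_nf

variable {q : ℕ}

theorem character_apply (m : ℤ) : character q m = Complex.exp (2 * Real.pi * I * m / q) := rfl

theorem character_ne_zero (m : ℤ) : character q m ≠ 0 := Complex.exp_ne_zero _

theorem character_mul_natCast (l : ℤ) (m : ℕ) : character q (l * m) = character q l ^ m := by
  rw [← AddChar.map_nsmul_eq_pow, nsmul_eq_mul, mul_comm]

theorem star_character (m : ℤ) : starRingEnd ℂ (character q m) = character q (-m) := by
  simp [character_apply, ← Complex.exp_conj, neg_div, map_ofNat]

theorem dvd_natCast_sub_natCast_iff (m n : Fin q) :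
    (q : ℤ) ∣ ((m : ℕ) : ℤ) - ((n : ℕ) : ℤ) ↔ m = n := by
  rw [← Int.modEq_iff_dvd, Int.natCast_modEq_iff, Fin.ext_iff]
  exact ⟨fun h => (Nat.ModEq.eq_of_lt_of_lt h n.2 m.2).symm, fun h => h ▸ rfl⟩

variable [NeZero q]

theorem character_eq_one_iff {m : ℤ} : character q m = 1 ↔ (q : ℤ) ∣ m := by
  rw [← (Complex.isPrimitiveRoot_exp q (NeZero.ne q)).zpow_eq_one_iff_dvd, character_apply,
    ← Complex.exp_int_mul]
  ring_nf

theorem character_eq_iff {m n : ℤ} : character q m = character q n ↔ (q : ℤ) ∣ m - n := by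
  rw [← character_eq_one_iff, AddChar.map_sub_eq_div, div_eq_one_iff_eq (character_ne_zero n)]

theorem character_pow_eq_one (m : ℤ) : character q m ^ q = 1 := by
  rw [← character_mul_natCast, character_eq_one_iff]
  exact dvd_mul_left _ _

theorem sum_character_mul (l : ℤ) :
    ∑ m : Fin q, character q (l * (m : ℕ)) = if (q : ℤ) ∣ l then (q : ℂ) else 0 := by
  simp only [character_mul_natCast]
  rw [Fin.sum_univ_eq_sum_range (fun m => character q l ^ m) q]
  split_ifs with h
  · simp [character_eq_one_iff.mpr h]
  · rw [geom_sum_eq (mt character_eq_one_iff.mp h), character_pow_eq_one, sub_self, zero_div]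

end Character

section Fourier

variable {d : ℕ} {q : Fin d → ℕ}

/-- The discrete Fourier transform of a function of one variable with period `q`. -/
def dftOne (q : ℕ) (v : ℤ → ℝ) (l : ℤ) : ℂ :=
  (q : ℂ)⁻¹ * ∑ m : Fin q, (v (m : ℕ) : ℂ) * character q (-l * (m : ℕ))

theorem dft_eq_sum_mul_prod (V : (Fin d → ℤ) → ℝ) (l : Fin d → ℤ) :
    dft d q V l = (∏ j, (q j : ℂ))⁻¹ * ∑ n : Cell d q,
      (V fun j => ((n j : ℕ) : ℤ)) * ∏ j, character (q j) (-l j * (n j : ℕ)) := by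
  rw [dft, one_div]
  congr 1
  refine Finset.sum_congr rfl fun n _ => ?_
  simp only [character_apply, ← Complex.exp_sum, Finset.mul_sum]
  congr 2
  refine Finset.sum_congr rfl fun j _ => ?_
  push_cast
  ring

theorem dft_neg (V : (Fin d → ℤ) → ℝ) (l : Fin d → ℤ) :
    dft d q V (-l) = starRingEnd ℂ (dft d q V l) := by
  simp only [dft_eq_sum_mul_prod, map_mul, map_inv₀, map_prod, map_sum, map_natCast,
    Complex.conj_ofReal, star_character, Pi.neg_apply, neg_mul]

variable [∀ j, NeZero (q j)]

theorem dft_sum_apply (v : Fin d → ℤ → ℝ) (l : Fin d → ℤ) :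
    dft d q (fun n => ∑ j, v j (n j)) l = ∑ j, dftOne (q j) (v j) (l j) *
      ∏ i ∈ Finset.univ.erase j, if (q i : ℤ) ∣ l i then (1 : ℂ) else 0 := by
  have single_mul_prod (j : Fin d) (n : Cell d q) :
      (v j (n j : ℕ) : ℂ) * ∏ i, character (q i) (-l i * (n i : ℕ)) =
        ∏ i, (if i = j then (v i (n i : ℕ) : ℂ) else 1) *
          character (q i) (-l i * (n i : ℕ)) := by
    rw [Finset.prod_mul_distrib, Fintype.prod_ite_eq']
  rw [dft_eq_sum_mul_prod]
  push_cast
  simp only [Finset.sum_mul]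
  rw [Finset.sum_comm, Finset.mul_sum]
  refine Finset.sum_congr rfl fun j _ => ?_
  simp only [single_mul_prod]
  rw [← Fintype.prod_sum fun i (m : Fin (q i)) => (if i = j then (v i (m : ℕ) : ℂ) else 1) *
    character (q i) (-l i * (m : ℕ)), ← Finset.prod_inv_distrib, ← Finset.prod_mul_distrib,
    ← Finset.mul_prod_erase _ _ (Finset.mem_univ j)]
  congr 1
  · simp [dftOne]
  · refine Finset.prod_congr rfl fun i hi => ?_
    simp only [Finset.ne_of_mem_erase hi, if_false, one_mul, sum_character_mul, dvd_neg]
    split_ifs <;> simp [NeZero.ne]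

theorem existsUnique_cell (n : Fin d → ℤ) :
    ∃! c : Cell d q, ∀ j, (q j : ℤ) ∣ n j - (c j : ℕ) := by
  have coordinate (j : Fin d) : ∃ c : Fin (q j), (q j : ℤ) ∣ n j - (c : ℕ) := by
    have q_ne : (q j : ℤ) ≠ 0 := by exact_mod_cast NeZero.ne (q j)
    obtain ⟨m, hm⟩ := Int.eq_ofNat_of_zero_le (Int.emod_nonneg (n j) q_ne)
    have m_lt : m < q j := by
      have := Int.emod_lt_of_pos (n j) (by positivity : (0 : ℤ) < q j)
      omega
    exact ⟨⟨m, m_lt⟩, hm ▸ Int.dvd_self_sub_emod⟩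
  choose c hc using coordinate
  refine ⟨c, hc, fun c' hc' => funext fun j => (dvd_natCast_sub_natCast_iff _ _).mp ?_⟩
  simpa using dvd_sub (hc j) (hc' j)

theorem sum_dft_mul_prod_character {V : (Fin d → ℤ) → ℝ} (hV : IsPeriodicPotential d q V)
    (n : Fin d → ℤ) :
    ∑ l : Cell d q, dft d q V (fun j => ((l j : ℕ) : ℤ)) *
      ∏ j, character (q j) (n j * (l j : ℕ)) = V n := by
  obtain ⟨c, hc, c_unique⟩ := existsUnique_cell (q := q) n
  have V_c : V (fun j => ((c j : ℕ) : ℤ)) = V n := by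
    rw [← hV (fun j => ((c j : ℕ) : ℤ)) (fun j => n j - (c j : ℕ)) hc]
    simp [Pi.add_def]
  have orthogonality (m : Cell d q) : ∑ l : Cell d q,
      (∏ j, character (q j) (-(l j : ℕ) * (m j : ℕ))) * ∏ j, character (q j) (n j * (l j : ℕ)) =
        if m = c then ∏ j, (q j : ℂ) else 0 := by
    have combine (l : Cell d q) (j : Fin d) : character (q j) (-(l j : ℕ) * (m j : ℕ)) *
        character (q j) (n j * (l j : ℕ)) = character (q j) ((n j - (m j : ℕ)) * (l j : ℕ)) := by
      rw [← AddChar.map_add_eq_mul]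
      ring_nf
    simp only [← Finset.prod_mul_distrib, combine]
    rw [← Fintype.prod_sum fun j (l : Fin (q j)) =>
      character (q j) ((n j - (m j : ℕ)) * (l : ℕ))]
    simp only [sum_character_mul]
    split_ifs with h
    · exact Finset.prod_congr rfl fun j _ => if_pos (h ▸ hc j)
    · obtain ⟨j, hj⟩ := not_forall.mp (mt (c_unique m) h)
      exact Finset.prod_eq_zero (Finset.mem_univ j) (if_neg hj)
  have Q_ne : ∏ j, (q j : ℂ) ≠ 0 :=
    Finset.prod_ne_zero_iff.mpr fun j _ => Nat.cast_ne_zero.mpr (NeZero.ne _)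
  simp only [dft_eq_sum_mul_prod, mul_assoc, Finset.sum_mul]
  rw [← Finset.mul_sum, Finset.sum_comm]
  simp only [← Finset.mul_sum, orthogonality, mul_ite, mul_zero, Fintype.sum_ite_eq', V_c]
  field_simp

theorem exists_separation_of_dft_eq_zero {V : (Fin d → ℤ) → ℝ} (hV : IsPeriodicPotential d q V)
    (h : ∀ l : Cell d q, ∃ j, ∀ i, i ≠ j → l i ≠ 0 → dft d q V (fun j => ((l j : ℕ) : ℤ)) = 0) :
    ∃ v : Fin d → ℤ → ℝ, ∀ n, V n = ∑ j, v j (n j) := by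
  choose s hs using h
  refine ⟨fun j m => (∑ l : Cell d q with s l = j, dft d q V (fun j => ((l j : ℕ) : ℤ)) *
    character (q j) (m * (l j : ℕ))).re, fun n => ?_⟩
  have term (l : Cell d q) : dft d q V (fun j => ((l j : ℕ) : ℤ)) *
      ∏ j, character (q j) (n j * (l j : ℕ)) = dft d q V (fun j => ((l j : ℕ) : ℤ)) *
        character (q (s l)) (n (s l) * (l (s l) : ℕ)) := by
    by_cases hl : ∃ i, i ≠ s l ∧ l i ≠ 0
    · obtain ⟨i, his, hi⟩ := hl
      simp only [hs l i his hi, zero_mul]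
    · push Not at hl
      rw [Finset.prod_eq_single (s l) (fun i _ hi => by simp [hl i hi]) (by simp)]
  calc V n = (∑ l : Cell d q, dft d q V (fun j => ((l j : ℕ) : ℤ)) *
        character (q (s l)) (n (s l) * (l (s l) : ℕ))).re := by
        simp only [← term, sum_dft_mul_prod_character hV n, Complex.ofReal_re]
    _ = (∑ j, ∑ l : Cell d q with s l = j, dft d q V (fun j => ((l j : ℕ) : ℤ)) *
        character (q j) (n j * (l j : ℕ))).re := by
        rw [← Finset.sum_fiberwise _ s]
        congr 1
        refine Finset.sum_congr rfl fun j _ => Finset.sum_congr rfl fun l hl => ?_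
        rw [(Finset.mem_filter.mp hl).2]
    _ = _ := Complex.re_sum _ _

end Fourier

section Separability

variable {d : ℕ} {q : Fin d → ℕ}

/-- The phases `ρ^j_{n_j}` multiplying the quasimomenta in the row `n` of a Floquet matrix. -/
def blochPhase (n : Cell d q) (j : Fin d) : ℂ := rho d q j (n j : ℕ)

theorem blochPhase_apply (n : Cell d q) (j : Fin d) :
    blochPhase n j = character (q j) (n j : ℕ) := rfl

theorem floquetDet_eq_det_diagonal_add (V : (Fin d → ℤ) → ℝ) (z : Fin d → ℂ) (lam : ℂ) :
    floquetDet d q V z lam = (Matrix.diagonal (fun n => dispersion blochPhase z n - lam) +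
      Matrix.of fun n n' : Cell d q =>
        dft d q V fun j => ((n j : ℕ) : ℤ) - ((n' j : ℕ) : ℤ)).det := by
  rw [floquetDet]
  congr 1
  ext n n'
  rcases eq_or_ne n n' with rfl | h
  · simp [floquetMatrix, dispersion, blochPhase]
    ring
  · simp [floquetMatrix, h]

variable [∀ j, NeZero (q j)]

theorem blochPhase_injective : Function.Injective (blochPhase : Cell d q → Fin d → ℂ) := by
  intro n m h
  refine _root_.funext fun j => (dvd_natCast_sub_natCast_iff _ _).mp (character_eq_iff.mp ?_)
  exact congrFun h j

theorem blochPhase_zero : (blochPhase (0 : Cell d q)) = 1 := by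
  ext j
  simp [blochPhase_apply]

theorem blochPhase_ne_one {l : Cell d q} {j : Fin d} (hj : l j ≠ 0) : blochPhase l j ≠ 1 := by
  intro h
  rw [blochPhase_apply, character_eq_one_iff] at h
  exact hj ((dvd_natCast_sub_natCast_iff (l j) 0).mp (by simpa using h))

theorem norm_dft_eq_of_floquetDet_imp (hd : 3 ≤ d) (hco : Pairwise (Nat.Coprime on q))
    {V Y : (Fin d → ℤ) → ℝ} {lam : ℂ}
    (hdet : ∀ z : Fin d → ℂ, (∀ j, z j ≠ 0) → floquetDet d q V z lam = 0 →
      floquetDet d q Y z lam = 0)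
    {l : Cell d q} {i j : Fin d} (hij : i ≠ j) (hi : l i ≠ 0) (hj : l j ≠ 0) :
    ‖dft d q V fun j => ((l j : ℕ) : ℤ)‖ = ‖dft d q Y fun j => ((l j : ℕ) : ℤ)‖ := by
  simp only [floquetDet_eq_det_diagonal_add] at hdet
  have h := mul_eq_mul_of_det_imp (ph := blochPhase) (o := 0) (l := l) (by simpa using hd)
    (fun j => NeZero.ne (q j)) hco (fun n j => character_pow_eq_one (n j : ℕ)) blochPhase_injective
    blochPhase_zero hdet hij (blochPhase_ne_one hi) (blochPhase_ne_one hj)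
  have conj_mul (W : (Fin d → ℤ) → ℝ) :
      (dft d q W fun j => (((0 : Cell d q) j : ℕ) : ℤ) - ((l j : ℕ) : ℤ)) *
        (dft d q W fun j => ((l j : ℕ) : ℤ) - (((0 : Cell d q) j : ℕ) : ℤ)) =
          ‖dft d q W fun j => ((l j : ℕ) : ℤ)‖ ^ 2 := by
    simp only [Pi.zero_apply, Fin.val_zero, Nat.cast_zero, zero_sub, sub_zero]
    rw [← Complex.conj_mul', ← dft_neg]
    rfl
  simp only [Matrix.of_apply, conj_mul] at h
  exact (sq_eq_sq₀ (norm_nonneg _) (norm_nonneg _)).mp (by exact_mod_cast h)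

theorem dft_sum_apply_eq_zero (v : Fin d → ℤ → ℝ) {l : Cell d q} {i j : Fin d} (hij : i ≠ j)
    (hi : l i ≠ 0) (hj : l j ≠ 0) :
    dft d q (fun n => ∑ j, v j (n j)) (fun j => ((l j : ℕ) : ℤ)) = 0 := by
  rw [dft_sum_apply]
  refine Finset.sum_eq_zero fun k _ => ?_
  obtain ⟨m, hmk, hm⟩ : ∃ m, m ≠ k ∧ l m ≠ 0 := by
    by_cases hik : i = k
    · exact ⟨j, hik ▸ hij.symm, hj⟩
    · exact ⟨i, hik, hi⟩
  have not_dvd : ¬ (q m : ℤ) ∣ ((l m : ℕ) : ℤ) :=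
    fun h => hm ((dvd_natCast_sub_natCast_iff (l m) 0).mp (by simpa using h))
  rw [Finset.prod_eq_zero (Finset.mem_erase.mpr ⟨hmk, Finset.mem_univ m⟩) (if_neg not_dvd),
    mul_zero]

theorem exists_separation_of_floquetDet_imp (hd : 3 ≤ d) (hco : Pairwise (Nat.Coprime on q))
    {V : (Fin d → ℤ) → ℝ} (hV : IsPeriodicPotential d q V) (y : Fin d → ℤ → ℝ) {lam : ℂ}
    (hdet : ∀ z : Fin d → ℂ, (∀ j, z j ≠ 0) → floquetDet d q V z lam = 0 →
      floquetDet d q (fun n => ∑ j, y j (n j)) z lam = 0) :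
    ∃ v : Fin d → ℤ → ℝ, ∀ n, V n = ∑ j, v j (n j) := by
  refine exists_separation_of_dft_eq_zero hV fun l => ?_
  have : Nonempty (Fin d) := ⟨⟨0, by omega⟩⟩
  have dft_V {i j : Fin d} (hij : i ≠ j) (hi : l i ≠ 0) (hj : l j ≠ 0) :
      dft d q V (fun j => ((l j : ℕ) : ℤ)) = 0 := by
    rw [← norm_eq_zero, norm_dft_eq_of_floquetDet_imp hd hco hdet hij hi hj,
      dft_sum_apply_eq_zero y hij hi hj, norm_zero]
  by_cases hl : ∃ j, l j ≠ 0
  · obtain ⟨j, hj⟩ := hl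
    exact ⟨j, fun i hij hi => dft_V hij hi hj⟩
  · push Not at hl
    exact ⟨Classical.arbitrary _, fun i _ hi => absurd (hl i) hi⟩

end Separability

section KroneckerSum

open Matrix

theorem exists_common_eigenvector {ι K E : Type*} [Field K] [IsAlgClosed K] [AddCommGroup E]
    [Module K E] [FiniteDimensional K E] {A : ι → Module.End K E}
    (hA : ∀ i j, Commute (A i) (A j)) {W : Submodule K E} (hW : W ≠ ⊥)
    (hWA : ∀ i, ∀ f ∈ W, A i f ∈ W) : ∃ f ∈ W, f ≠ 0 ∧ ∀ i, ∃ μ : K, A i f = μ • f := by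
  obtain ⟨U, ⟨hU, hUW, hUA⟩, U_min⟩ := wellFounded_lt.has_min
    {U : Submodule K E | U ≠ ⊥ ∧ U ≤ W ∧ ∀ i, ∀ f ∈ U, A i f ∈ U} ⟨W, hW, le_rfl, hWA⟩
  obtain ⟨f, hfU, hf⟩ := Submodule.exists_mem_ne_zero_of_ne_bot hU
  refine ⟨f, hUW hfU, hf, fun i => ?_⟩
  have : Nontrivial U := Submodule.nontrivial_iff_ne_bot.mpr hU
  obtain ⟨μ, hμ⟩ := Module.End.exists_eigenvalue ((A i).restrict (hUA i))
  obtain ⟨g, hg⟩ := hμ.exists_hasEigenvector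
  have g_mem : (g : E) ∈ U ⊓ (A i).eigenspace μ :=
    ⟨g.2, Module.End.mem_eigenspace_iff.mpr (congrArg Subtype.val hg.apply_eq_smul)⟩
  have invariant (j : ι) (f : E) (hf : f ∈ U ⊓ (A i).eigenspace μ) :
      A j f ∈ U ⊓ (A i).eigenspace μ := by
    refine ⟨hUA j f hf.1, Module.End.mem_eigenspace_iff.mpr ?_⟩
    rw [← Module.End.mul_apply, (hA i j).eq, Module.End.mul_apply,
      Module.End.mem_eigenspace_iff.mp hf.2, map_smul]
  have U_le : U ≤ (A i).eigenspace μ := by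
    by_contra h
    refine U_min _ ⟨fun hbot => hg.2 (Subtype.ext ?_), inf_le_left.trans hUW, invariant⟩
      (inf_le_left.lt_of_ne (mt inf_eq_left.mp h))
    simpa [hbot] using g_mem
  exact ⟨μ, Module.End.mem_eigenspace_iff.mp (U_le hfU)⟩

theorem det_sub_smul_one_eq_zero_iff {n K : Type*} [Fintype n] [DecidableEq n] [Field K]
    (M : Matrix n n K) (lam : K) :
    (M - lam • (1 : Matrix n n K)).det = 0 ↔ ∃ f, f ≠ 0 ∧ M *ᵥ f = lam • f := by
  simp only [← Matrix.exists_mulVec_eq_zero_iff, sub_mulVec, smul_mulVec, one_mulVec, sub_eq_zero]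

variable {J : Type*} [DecidableEq J] {κ : J → Type*} [∀ j, Fintype (κ j)]

section CommSemiring

variable {R : Type*} [CommSemiring R]

/-- The matrix `N` acting on the `j`-th tensor factor of `⨂ R^{κ j}`, the tensor product being
encoded as the space of functions on `∏ κ j`. -/
def coordinateAction (j : J) (N : Matrix (κ j) (κ j) R) : Module.End R ((∀ i, κ i) → R) where
  toFun f n := (N *ᵥ fun m => f (Function.update n j m)) (n j)
  map_add' f g := by
    ext n
    exact congrFun (mulVec_add N _ _) (n j)
  map_smul' c f := by
    ext n
    exact congrFun (mulVec_smul N c _) (n j)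

theorem coordinateAction_apply (j : J) (N : Matrix (κ j) (κ j) R) (f : (∀ i, κ i) → R)
    (n : ∀ i, κ i) :
    coordinateAction j N f n = ∑ m, N (n j) m * f (Function.update n j m) := rfl

theorem commute_coordinateAction {i j : J} (hij : i ≠ j) (M : Matrix (κ i) (κ i) R)
    (N : Matrix (κ j) (κ j) R) : Commute (coordinateAction i M) (coordinateAction j N) := by
  refine LinearMap.ext fun f => _root_.funext fun n => ?_
  simp only [Module.End.mul_apply, coordinateAction_apply, Finset.mul_sum,
    Function.update_of_ne hij, Function.update_of_ne hij.symm, Function.update_comm hij]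
  rw [Finset.sum_comm]
  simp only [mul_left_comm]

variable [Fintype J]

theorem coordinateAction_prod {j : J} {N : Matrix (κ j) (κ j) R} {f : ∀ i, κ i → R} {x : R}
    (hf : N *ᵥ f j = x • f j) :
    coordinateAction j N (fun n => ∏ i, f i (n i)) = x • fun n => ∏ i, f i (n i) := by
  ext n
  have prod_update (m : κ j) : ∏ i, f i (Function.update n j m i) =
      f j m * ∏ i ∈ Finset.univ.erase j, f i (n i) := by
    rw [← Finset.mul_prod_erase _ _ (Finset.mem_univ j), Function.update_self]
    congr 1
    exact Finset.prod_congr rfl fun i hi => by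
      rw [Function.update_of_ne (Finset.ne_of_mem_erase hi)]
  have eigen := congrFun hf (n j)
  simp only [mulVec, dotProduct, Pi.smul_apply, smul_eq_mul] at eigen
  simp only [coordinateAction_apply, prod_update, ← mul_assoc, ← Finset.sum_mul, eigen,
    Pi.smul_apply, smul_eq_mul]
  rw [mul_assoc, Finset.mul_prod_erase _ (fun i => f i (n i)) (Finset.mem_univ j)]

variable [∀ j, DecidableEq (κ j)]

/-- The Kronecker sum `∑ j, 1 ⊗ ⋯ ⊗ N j ⊗ ⋯ ⊗ 1`. -/
def kroneckerSum (N : ∀ j, Matrix (κ j) (κ j) R) : Matrix (∀ j, κ j) (∀ j, κ j) R :=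
  fun n n' => ∑ j, N j (n j) (n' j) * ∏ i ∈ Finset.univ.erase j, if n i = n' i then 1 else 0

theorem kroneckerSum_mulVec (N : ∀ j, Matrix (κ j) (κ j) R) (f : (∀ j, κ j) → R) :
    kroneckerSum N *ᵥ f = (∑ j, coordinateAction j (N j)) f := by
  ext n
  simp only [mulVec, dotProduct, kroneckerSum, Finset.sum_mul, LinearMap.sum_apply,
    Finset.sum_apply, coordinateAction_apply]
  rw [Finset.sum_comm]
  refine Finset.sum_congr rfl fun j _ => ?_
  refine (Fintype.sum_of_injective _ (Function.update_injective n j) _ _ (fun n' hn' => ?_)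
    fun m => ?_).symm
  · obtain ⟨i, hij, hi⟩ : ∃ i, i ≠ j ∧ n i ≠ n' i := by
      by_contra! h
      exact hn' ⟨n' j, Function.update_eq_iff.mpr ⟨rfl, h⟩⟩
    rw [Finset.prod_eq_zero (Finset.mem_erase.mpr ⟨hij, Finset.mem_univ i⟩) (if_neg hi), mul_zero,
      zero_mul]
  · rw [Finset.prod_eq_one fun i hi => if_pos (Function.update_of_ne
      (Finset.ne_of_mem_erase hi) _ _).symm, mul_one, Function.update_self]

end CommSemiring

variable [∀ j, DecidableEq (κ j)] [Fintype J] {K : Type*} [Field K]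

theorem det_kroneckerSum_sub_smul_one_eq_zero (N : ∀ j, Matrix (κ j) (κ j) K) {x : J → K}
    (hx : ∀ j, (N j - x j • (1 : Matrix (κ j) (κ j) K)).det = 0) :
    (kroneckerSum N - (∑ j, x j) • (1 : Matrix (∀ j, κ j) (∀ j, κ j) K)).det = 0 := by
  simp only [det_sub_smul_one_eq_zero_iff] at hx ⊢
  choose f hf eigen using hx
  choose n hn using fun j => Function.ne_iff.mp (hf j)
  refine ⟨fun n => ∏ j, f j (n j), fun h => ?_, ?_⟩
  · exact Finset.prod_ne_zero_iff.mpr (fun j _ => hn j) (congrFun h n)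
  · simp only [kroneckerSum_mulVec, LinearMap.sum_apply, coordinateAction_prod (eigen _),
      Finset.sum_smul]

theorem exists_det_eq_zero_of_det_kroneckerSum_sub_smul_one_eq_zero [IsAlgClosed K]
    (N : ∀ j, Matrix (κ j) (κ j) K) {lam : K}
    (hN : (kroneckerSum N - lam • (1 : Matrix (∀ j, κ j) (∀ j, κ j) K)).det = 0) :
    ∃ x : J → K, ∑ j, x j = lam ∧ ∀ j, (N j - x j • (1 : Matrix (κ j) (κ j) K)).det = 0 := by
  simp only [det_sub_smul_one_eq_zero_iff, kroneckerSum_mulVec] at hN ⊢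
  let A (j : J) : Module.End K ((∀ j, κ j) → K) := coordinateAction j (N j)
  have A_comm (i j : J) : Commute (A i) (A j) := by
    rcases eq_or_ne i j with rfl | hij
    · exact Commute.refl _
    · exact commute_coordinateAction hij _ _
  obtain ⟨g, hg, hgA⟩ := hN
  obtain ⟨f, hfA, hf, eigen⟩ := exists_common_eigenvector A_comm
    (W := (∑ j, A j).eigenspace lam)
    (Submodule.ne_bot_iff _ |>.mpr ⟨g, Module.End.mem_eigenspace_iff.mpr hgA, hg⟩)
    fun i f hf => Module.End.mapsTo_genEigenspace_of_comm
      (Commute.sum_left _ _ _ fun j _ => A_comm j i) lam 1 hf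
  choose x hx using eigen
  refine ⟨x, smul_left_injective K hf ?_, fun j => ?_⟩
  · simpa only [LinearMap.sum_apply, hx, ← Finset.sum_smul] using
      Module.End.mem_eigenspace_iff.mp hfA
  · obtain ⟨n, hn⟩ := Function.ne_iff.mp hf
    refine ⟨fun m => f (Function.update n j m), fun h => hn ?_, _root_.funext fun m => ?_⟩
    · simpa using congrFun h (n j)
    · simpa [A, coordinateAction_apply, mulVec, dotProduct] using
        congrFun (hx j) (Function.update n j m)

end KroneckerSum

section QuadraticPencil

open Matrix

variable {n R : Type*} [Fintype n] [DecidableEq n] [CommRing R]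

theorem natDegree_det_le_mul_card {M : Matrix n n R[X]} {k : ℕ}
    (hM : ∀ i j, (M i j).natDegree ≤ k) : M.det.natDegree ≤ Fintype.card n * k := by
  rw [det_apply]
  refine natDegree_sum_le_of_forall_le _ _ fun σ _ => (natDegree_smul_le _ _).trans ?_
  refine (natDegree_prod_le _ _).trans ((Finset.sum_le_card_nsmul _ _ k fun i _ => hM _ _).trans ?_)
  rw [smul_eq_mul, Finset.card_univ]

theorem coeff_det_of_natDegree_le {M : Matrix n n R[X]} {k : ℕ}
    (hM : ∀ i j, (M i j).natDegree ≤ k) :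
    M.det.coeff (Fintype.card n * k) = (M.map (coeff · k)).det := by
  simp only [det_apply, finsetSum_coeff, coeff_smul, map_apply]
  refine Finset.sum_congr rfl fun σ _ => ?_
  rw [← Finset.card_univ, coeff_prod_of_natDegree_le _ _ _ fun i _ => hM (σ i) i]

theorem exists_polynomial_eval_eq_det_quadratic (A B D : Matrix n n R) :
    ∃ p : R[X], p.natDegree ≤ Fintype.card n * 2 ∧ p.coeff (Fintype.card n * 2) = A.det ∧
      p.coeff 0 = D.det ∧ ∀ z, p.eval z = (z ^ 2 • A + z • B + D).det := by
  let M : Matrix n n R[X] := of fun i j => C (A i j) * X ^ 2 + C (B i j) * X + C (D i j)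
  have natDegree_M (i j : n) : (M i j).natDegree ≤ 2 := natDegree_quadratic_le
  have eval_det (z : R) : M.det.eval z = (z ^ 2 • A + z • B + D).det := by
    rw [← coe_evalRingHom, RingHom.map_det]
    congr 1
    ext i j
    simp [M, mul_comm (z ^ 2), mul_comm z]
  refine ⟨M.det, natDegree_det_le_mul_card natDegree_M, ?_, ?_, eval_det⟩
  · rw [coeff_det_of_natDegree_le natDegree_M]
    congr 1
    ext i j
    simp [M]
  · rw [coeff_zero_eq_eval_zero, eval_det]
    simp

theorem eval_eq_of_comp_C_mul_X_eq [IsDomain R] {q : ℕ} {ζ : R} (hζ : IsPrimitiveRoot ζ q)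
    (hq : q ≠ 0) {p : R[X]} (hp : p.comp (C ζ * X) = p) (hpq : p.natDegree ≤ q * 2) (z : R) :
    p.eval z = p.coeff 0 + p.coeff q * z ^ q + p.coeff (q * 2) * (z ^ q) ^ 2 := by
  have coeff_eq_zero {k : ℕ} (hk : ¬q ∣ k) : p.coeff k = 0 := by
    have h : p.coeff k * ζ ^ k = p.coeff k := by rw [← comp_C_mul_X_coeff, hp]
    have root_ne : ζ ^ k - 1 ≠ 0 := sub_ne_zero.mpr (mt (hζ.pow_eq_one_iff_dvd k).mp hk)
    exact (mul_eq_zero.mp (by linear_combination h : p.coeff k * (ζ ^ k - 1) = 0)).resolve_right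
      root_ne
  have eq_expand : p = expand R q (contract q p) := by
    ext k
    rw [coeff_expand hq.bot_lt, coeff_contract hq]
    split_ifs with hk
    · rw [Nat.div_mul_cancel hk]
    · exact coeff_eq_zero hk
  have natDegree_contract : (contract q p).natDegree ≤ 2 := by
    rw [eq_expand, natDegree_expand, mul_comm] at hpq
    exact Nat.le_of_mul_le_mul_left hpq hq.bot_lt
  conv_lhs => rw [eq_expand, expand_eval, eval_eq_sum_range' (Nat.lt_succ_of_le natDegree_contract)]
  simp [Finset.sum_range_succ, coeff_contract hq, mul_comm]

end QuadraticPencil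

section OneDimensional

open Matrix

variable {q : ℕ}

/-- The Floquet matrix of a potential on `ℤ` with period `q`, indexed by `Fin q`. -/
def floquetMatrixOne (q : ℕ) (v : ℤ → ℝ) (z : ℂ) : Matrix (Fin q) (Fin q) ℂ :=
  diagonal (fun m : Fin q => character q (m : ℕ) * z + (character q (m : ℕ) * z)⁻¹) +
    of fun m m' : Fin q => dftOne q v (((m : ℕ) : ℤ) - ((m' : ℕ) : ℤ))

theorem dft_one (v : ℤ → ℝ) (l : Fin 1 → ℤ) :
    dft 1 (fun _ => q) (fun n => v (n 0)) l = dftOne q v (l 0) := by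
  simp only [dft_eq_sum_mul_prod, dftOne, Finset.univ_unique, Finset.prod_singleton]
  exact congrArg _ (Fintype.sum_equiv (Equiv.funUnique (Fin 1) (Fin q)) _ _ fun _ => rfl)

theorem floquetDet_one (v : ℤ → ℝ) (z : Fin 1 → ℂ) (lam : ℂ) :
    floquetDet 1 (fun _ => q) (fun n => v (n 0)) z lam =
      (floquetMatrixOne q v (z 0) - lam • (1 : Matrix (Fin q) (Fin q) ℂ)).det := by
  have submatrix_eq : floquetMatrix 1 (fun _ => q) (fun n => v (n 0)) z =
      (floquetMatrixOne q v (z 0)).submatrix (Equiv.funUnique (Fin 1) (Fin q))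
        (Equiv.funUnique (Fin 1) (Fin q)) := by
    ext n n'
    have ext_iff : n = n' ↔ n 0 = n' 0 := funext_iff.trans Fin.forall_fin_one
    simp only [floquetMatrix, dft_one, floquetMatrixOne, ext_iff, Finset.univ_unique,
      Finset.sum_singleton, submatrix_apply, Matrix.add_apply, diagonal_apply, of_apply]
    rfl
  rw [floquetDet, submatrix_eq, ← det_submatrix_equiv_self (Equiv.funUnique (Fin 1) (Fin q))]
  congr 1
  ext n n'
  simp [Matrix.one_apply, funext_iff]

theorem floquetMatrix_sum_eq_kroneckerSum {d : ℕ} {q : Fin d → ℕ} [∀ j, NeZero (q j)]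
    (v : Fin d → ℤ → ℝ) (z : Fin d → ℂ) :
    floquetMatrix d q (fun n => ∑ j, v j (n j)) z =
      kroneckerSum fun j => floquetMatrixOne (q j) (v j) (z j) := by
  ext n n'
  simp only [floquetMatrix, dft_sum_apply, dvd_natCast_sub_natCast_iff, kroneckerSum,
    floquetMatrixOne, Matrix.add_apply, diagonal_apply, of_apply, add_mul, Finset.sum_add_distrib]
  congr 1
  split_ifs with h
  · simp [h, rho, character_apply, Finset.sum_add_distrib]
  · obtain ⟨i, hi⟩ := Function.ne_iff.mp h
    refine (Finset.sum_eq_zero fun j _ => ?_).symm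
    rcases eq_or_ne j i with rfl | hij
    · rw [if_neg hi, zero_mul]
    · rw [Finset.prod_eq_zero (Finset.mem_erase.mpr ⟨hij.symm, Finset.mem_univ i⟩) (if_neg hi),
        mul_zero]

theorem exists_polynomial_eval_eq_pow_mul_det (v : ℤ → ℝ) (lam : ℂ) :
    ∃ p : ℂ[X], p.natDegree ≤ q * 2 ∧ p.coeff (q * 2) = ∏ m : Fin q, character q (m : ℕ) ∧
      p.coeff 0 = (∏ m : Fin q, character q (m : ℕ))⁻¹ ∧ ∀ z, z ≠ 0 → p.eval z =
        z ^ q * (floquetMatrixOne q v z - lam • (1 : Matrix (Fin q) (Fin q) ℂ)).det := by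
  let e (m : Fin q) : ℂ := character q (m : ℕ)
  obtain ⟨p, natDegree_p, coeff_card, coeff_zero, eval_p⟩ :=
    exists_polynomial_eval_eq_det_quadratic (diagonal e)
      (of (fun m m' : Fin q => dftOne q v ((m : ℕ) - (m' : ℕ))) - lam • 1) (diagonal e⁻¹)
  rw [Fintype.card_fin] at natDegree_p
  rw [Fintype.card_fin, det_diagonal] at coeff_card
  rw [det_diagonal] at coeff_zero
  refine ⟨p, natDegree_p, coeff_card, coeff_zero.trans (Finset.prod_inv_distrib _), ?_⟩
  intro z hz
  have det_smul := det_smul (floquetMatrixOne q v z - lam • (1 : Matrix (Fin q) (Fin q) ℂ)) z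
  rw [Fintype.card_fin] at det_smul
  rw [eval_p, ← det_smul]
  congr 1
  ext m m'
  rcases eq_or_ne m m' with rfl | h
  · have character_ne := character_ne_zero (q := q) (m : ℕ)
    simp only [floquetMatrixOne, e, Matrix.add_apply, Matrix.sub_apply, Matrix.smul_apply,
      diagonal_apply_eq, of_apply, one_apply_eq, Pi.inv_apply, smul_eq_mul]
    field_simp
    ring
  · simp [floquetMatrixOne, h]

/-- The part of the one-dimensional Floquet determinant which depends on the quasimomentum `z`. -/
def quasimomentumTerm (q : ℕ) (z : ℂ) : ℂ :=
  (∏ m : Fin q, character q (m : ℕ)) * z ^ q + ((∏ m : Fin q, character q (m : ℕ)) * z ^ q)⁻¹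

theorem prod_character_ne_zero : ∏ m : Fin q, character q (m : ℕ) ≠ 0 :=
  Finset.prod_ne_zero_iff.mpr fun _ _ => character_ne_zero _

variable [NeZero q]

theorem dftOne_congr (v : ℤ → ℝ) {l l' : ℤ} (h : (q : ℤ) ∣ l - l') :
    dftOne q v l = dftOne q v l' := by
  have character_neg : character q (-l) = character q (-l') := by
    rwa [character_eq_iff, neg_sub_neg, dvd_sub_comm]
  simp only [dftOne, character_mul_natCast, character_neg]

theorem dvd_val_add_one_sub (m : Fin q) : (q : ℤ) ∣ ((m + 1 : Fin q) : ℕ) - ((m : ℕ) + 1) := by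
  rw [← Int.modEq_iff_dvd]
  exact_mod_cast ((Fin.val_add m 1 ▸ Nat.mod_modEq _ _).trans
    (Nat.ModEq.add_left _ (Fin.val_one' q ▸ Nat.mod_modEq 1 q))).symm

theorem det_floquetMatrixOne_character_mul (v : ℤ → ℝ) (z lam : ℂ) :
    (floquetMatrixOne q v (character q 1 * z) - lam • (1 : Matrix (Fin q) (Fin q) ℂ)).det =
      (floquetMatrixOne q v z - lam • (1 : Matrix (Fin q) (Fin q) ℂ)).det := by
  rw [← det_submatrix_equiv_self (Equiv.addRight (1 : Fin q)) (floquetMatrixOne q v z - _)]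
  congr 1
  ext m m'
  have character_add_one : character q ((m + 1 : Fin q) : ℕ) =
      character q (m : ℕ) * character q 1 := by
    rw [← AddChar.map_add_eq_mul, character_eq_iff]
    exact dvd_val_add_one_sub m
  have dftOne_add_one : dftOne q v (((m + 1 : Fin q) : ℕ) - ((m' + 1 : Fin q) : ℕ)) =
      dftOne q v ((m : ℕ) - (m' : ℕ)) := by
    have h := dvd_sub (dvd_val_add_one_sub m) (dvd_val_add_one_sub m')
    rw [sub_sub_sub_comm, add_sub_add_right_eq_sub] at h
    exact dftOne_congr v h
  simp [floquetMatrixOne, diagonal_apply, Matrix.one_apply, character_add_one, dftOne_add_one,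
    mul_assoc]

theorem exists_det_floquetMatrixOne_eq (v : ℤ → ℝ) (lam : ℂ) : ∃ F : ℂ, ∀ z, z ≠ 0 →
    (floquetMatrixOne q v z - lam • (1 : Matrix (Fin q) (Fin q) ℂ)).det =
      quasimomentumTerm q z + F := by
  obtain ⟨p, natDegree_p, coeff_top, coeff_zero, eval_p⟩ :=
    exists_polynomial_eval_eq_pow_mul_det (q := q) v lam
  have comp_eq : p.comp (C (character q 1) * X) = p := by
    refine eq_of_infinite_eval_eq _ _ ((Set.finite_singleton (0 : ℂ)).infinite_compl.mono ?_)
    intro z (hz : z ≠ 0)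
    simp only [Set.mem_ofPred_eq, eval_comp, eval_mul, eval_C, eval_X]
    rw [eval_p _ (mul_ne_zero (character_ne_zero 1) hz), eval_p z hz,
      det_floquetMatrixOne_character_mul, mul_pow, character_pow_eq_one, one_mul]
  have primitive : IsPrimitiveRoot (character q 1) q := by
    simpa [character_apply] using Complex.isPrimitiveRoot_exp q (NeZero.ne q)
  refine ⟨p.coeff q, fun z hz => mul_left_cancel₀ (pow_ne_zero q hz) ?_⟩
  have prod_ne := prod_character_ne_zero (q := q)
  rw [← eval_p z hz, eval_eq_of_comp_C_mul_X_eq primitive (NeZero.ne q) comp_eq natDegree_p,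
    coeff_top, coeff_zero, quasimomentumTerm, mul_inv]
  field_simp
  ring

theorem det_floquetMatrixOne_sub_det_one (v : ℤ → ℝ) (lam : ℂ) {z : ℂ} (hz : z ≠ 0) :
    (floquetMatrixOne q v z - lam • (1 : Matrix (Fin q) (Fin q) ℂ)).det -
      (floquetMatrixOne q v 1 - lam • (1 : Matrix (Fin q) (Fin q) ℂ)).det =
        quasimomentumTerm q z - quasimomentumTerm q 1 := by
  obtain ⟨F, hF⟩ := exists_det_floquetMatrixOne_eq (q := q) v lam
  rw [hF z hz, hF 1 one_ne_zero, add_sub_add_right_eq_sub]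

theorem exists_quasimomentumTerm_eq (w : ℂ) : ∃ z, z ≠ 0 ∧ quasimomentumTerm q z = w := by
  obtain ⟨u, hu⟩ := IsAlgClosed.exists_eq_mul_self (w ^ 2 - 4)
  let y := (w + u) / 2
  have y_quadratic : y * (w - y) = 1 := by
    linear_combination hu / 4
  have y_ne : y ≠ 0 := left_ne_zero_of_mul_eq_one y_quadratic
  obtain ⟨z, hz⟩ := IsAlgClosed.exists_pow_nat_eq (y / ∏ m : Fin q, character q (m : ℕ))
    (NeZero.pos q)
  refine ⟨z, ?_, ?_⟩
  · rintro rfl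
    rw [zero_pow (NeZero.ne q)] at hz
    exact div_ne_zero y_ne prod_character_ne_zero hz.symm
  · rw [quasimomentumTerm, hz, mul_div_cancel₀ _ prod_character_ne_zero,
      inv_eq_of_mul_eq_one_right y_quadratic]
    ring

theorem exists_det_floquetMatrixOne_eq_zero (v : ℤ → ℝ) (lam : ℂ) : ∃ z, z ≠ 0 ∧
    (floquetMatrixOne q v z - lam • (1 : Matrix (Fin q) (Fin q) ℂ)).det = 0 := by
  obtain ⟨F, hF⟩ := exists_det_floquetMatrixOne_eq (q := q) v lam
  obtain ⟨z, hz, hzF⟩ := exists_quasimomentumTerm_eq (q := q) (-F)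
  exact ⟨z, hz, by rw [hF z hz, hzF, neg_add_cancel]⟩

end OneDimensional

section Matching

open Asymptotics Bornology

theorem degree_sub_X_add_C_pow_lt {K : Type*} [Field K] [CharZero K] {f : K[X]} (hf : f.Monic)
    (hf₀ : f.natDegree ≠ 0) : (f - (X + C (f.nextCoeff / f.natDegree)) ^ f.natDegree).degree <
      ((f.natDegree - 1 : ℕ) : WithBot ℕ) := by
  refine (degree_lt_iff_coeff_zero _ _).mpr fun m hm => ?_
  rw [coeff_sub, coeff_X_add_C_pow, sub_eq_zero]
  have one_le : 1 ≤ f.natDegree := Nat.one_le_iff_ne_zero.mpr hf₀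
  obtain rfl | rfl | hlt : m = f.natDegree - 1 ∨ m = f.natDegree ∨ f.natDegree < m := by omega
  · rw [← nextCoeff_of_natDegree_pos one_le, Nat.sub_sub_self one_le, pow_one,
      Nat.choose_symm one_le, Nat.choose_one_right, div_mul_cancel₀]
    exact Nat.cast_ne_zero.mpr hf₀
  · simpa using hf.coeff_natDegree
  · rw [coeff_eq_zero_of_natDegree_lt hlt, Nat.choose_eq_zero_of_lt hlt, Nat.cast_zero, mul_zero]

theorem eval_sub_pow_isLittleO_cobounded {f : ℂ[X]} (hf : f.Monic) (hf₀ : f.natDegree ≠ 0) :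
    (fun x => f.eval x - (x + f.nextCoeff / f.natDegree) ^ f.natDegree) =o[cobounded ℂ]
      fun x => (x + f.nextCoeff / f.natDegree) ^ (f.natDegree - 1) := by
  have h : (f - (X + C (f.nextCoeff / f.natDegree)) ^ f.natDegree).degree <
      ((X + C (f.nextCoeff / f.natDegree)) ^ (f.natDegree - 1) : ℂ[X]).degree := by
    rw [degree_pow, degree_X_add_C, nsmul_one]
    exact degree_sub_X_add_C_pow_lt hf hf₀
  simpa using isLittleO_cobounded_of_degree_lt h

variable {ι : Type*} {U : Ultrafilter ι}

theorem exists_pow_eq_one_tendsto_of_tendsto_pow {ρ : ι → ℂ} {n : ℕ} (hn : n ≠ 0)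
    (hρ : Tendsto (fun t => ρ t ^ n) U (𝓝 1)) : ∃ ω, ω ^ n = 1 ∧ Tendsto ρ U (𝓝 ω) := by
  have bounded : ∀ᶠ t in (U : Filter ι), ρ t ∈ Metric.closedBall (0 : ℂ) 2 := by
    have norm_tendsto := hρ.norm
    rw [norm_one] at norm_tendsto
    filter_upwards [norm_tendsto.eventually_le_const one_lt_two] with t ht
    rw [norm_pow] at ht
    rw [mem_closedBall_zero_iff]
    by_contra! h
    exact (h.trans_le (le_self_pow₀ (one_le_two.trans h.le) hn)).not_ge ht
  obtain ⟨ω, -, hω⟩ := (isCompact_closedBall (0 : ℂ) 2).ultrafilter_le_nhds (U.map ρ)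
    (le_principal_iff.mpr bounded)
  have tendsto_ω : Tendsto ρ U (𝓝 ω) := hω
  exact ⟨ω, tendsto_nhds_unique (tendsto_ω.pow n) hρ, tendsto_ω⟩

theorem exists_pow_eq_one_tendsto_sub_mul {u w : ι → ℂ} {n : ℕ} (hn : n ≠ 0)
    (hw : Tendsto w U (cobounded ℂ))
    (huw : (fun t => u t ^ n - w t ^ n) =o[U] fun t => w t ^ (n - 1)) :
    ∃ ω, ω ^ n = 1 ∧ Tendsto (fun t => u t - ω * w t) U (𝓝 0) := by
  have w_ne : ∀ᶠ t in (U : Filter ι), w t ≠ 0 := hw.eventually_ne_cobounded 0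
  have quot_tendsto := huw.tendsto_div_nhds_zero
  have ratio_pow_tendsto : Tendsto (fun t => (u t / w t) ^ n) U (𝓝 1) := by
    have h := (quot_tendsto.mul (tendsto_inv₀_cobounded.comp hw)).add_const 1
    rw [mul_zero, zero_add] at h
    refine h.congr' (w_ne.mono fun t ht => ?_)
    simp only [Function.comp_apply]
    rw [← div_eq_mul_inv, div_div, pow_sub_one_mul hn, sub_div,
      div_self (pow_ne_zero n ht), div_pow, sub_add_cancel]
  obtain ⟨ω, hω, ratio_tendsto⟩ := exists_pow_eq_one_tendsto_of_tendsto_pow hn ratio_pow_tendsto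
  have geom_tendsto : Tendsto (fun t => ∑ i ∈ Finset.range n, (u t / w t) ^ i * ω ^ (n - 1 - i)) U
      (𝓝 (n * ω ^ (n - 1))) := by
    rw [← geom_sum₂_self]
    exact tendsto_finsetSum _ fun i _ => (ratio_tendsto.pow i).mul_const _
  have geom_ne : n * ω ^ (n - 1) ≠ 0 :=
    mul_ne_zero (Nat.cast_ne_zero.mpr hn) (pow_ne_zero _ (IsUnit.of_pow_eq_one hω hn).ne_zero)
  refine ⟨ω, hω, ?_⟩
  have h := quot_tendsto.div geom_tendsto geom_ne
  rw [zero_div] at h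
  refine h.congr' ?_
  filter_upwards [w_ne, geom_tendsto.eventually_ne geom_ne] with t ht hgeom
  have factor := (Commute.all (u t / w t) ω).mul_geom_sum₂ n
  rw [hω] at factor
  rw [Pi.div_apply, div_eq_iff hgeom, div_eq_iff (pow_ne_zero _ ht)]
  calc u t ^ n - w t ^ n = ((u t / w t) ^ n - 1) * w t ^ n := by
        rw [div_pow, sub_mul, one_mul, div_mul_cancel₀ _ (pow_ne_zero n ht)]
    _ = (u t / w t - ω) * w t * (∑ i ∈ Finset.range n, (u t / w t) ^ i * ω ^ (n - 1 - i)) *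
          w t ^ (n - 1) := by
        rw [← factor, ← pow_sub_one_mul hn]
        ring
    _ = _ := by rw [sub_mul, div_mul_cancel₀ _ ht]

theorem tendsto_cobounded_of_eval {p : ℂ[X]} {x : ι → ℂ} {l : Filter ι}
    (h : Tendsto (fun t => p.eval (x t)) l (cobounded ℂ)) : Tendsto x l (cobounded ℂ) := by
  rw [Metric.cobounded_eq_cocompact] at *
  exact Tendsto.of_tendsto_comp (f := x) (g := p.eval) h (comap_cocompact_le p.continuous)

theorem eval_tendsto_cobounded {p : ℂ[X]} (hp : p.natDegree ≠ 0) :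
    Tendsto p.eval (cobounded ℂ) (cobounded ℂ) := by
  have degree_pos := natDegree_pos_iff_degree_pos.mp hp.bot_lt
  exact tendsto_norm_atTop_iff_cobounded.mp
    (p.tendsto_norm_atTop degree_pos tendsto_norm_cobounded_atTop)

theorem eval_isTheta_cobounded {f : ℂ[X]} (hf : f.Monic) (s : ℂ) :
    f.eval =Θ[cobounded ℂ] fun x => (x + s) ^ f.natDegree := by
  have degree_eq : f.degree = ((X + C s) ^ f.natDegree : ℂ[X]).degree := by
    rw [degree_pow, degree_X_add_C, nsmul_one, degree_eq_natDegree hf.ne_zero]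
  have eval_eq : ((X + C s) ^ f.natDegree).eval = fun x => (x + s) ^ f.natDegree := by
    ext x
    simp
  rw [← eval_eq]
  exact ⟨isBigO_cobounded_of_degree_le degree_eq.le, isBigO_cobounded_of_degree_le degree_eq.ge⟩

theorem exists_tendsto_sub_mul_of_eval_eq {f g : ℂ[X]} (hf : f.Monic) (hg : g.Monic)
    (hf₀ : f.natDegree ≠ 0) (hfg : g.natDegree = f.natDegree) {T x : ι → ℂ}
    (hT : Tendsto T U (cobounded ℂ)) (h : ∀ t, g.eval (x t) = f.eval (T t)) :
    ∃ ω, ω ^ f.natDegree = 1 ∧ Tendsto (fun t => x t - ω * T t) U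
      (𝓝 (ω * (f.nextCoeff / f.natDegree) - g.nextCoeff / g.natDegree)) := by
  set r := g.nextCoeff / g.natDegree with hr
  set s := f.nextCoeff / f.natDegree with hs
  have x_tendsto : Tendsto x U (cobounded ℂ) :=
    tendsto_cobounded_of_eval (((eval_tendsto_cobounded hf₀).comp hT).congr fun t => (h t).symm)
  have x_isBigO : (fun t => x t + r) =O[U] fun t => T t + s := by
    have g_dominates := (eval_isTheta_cobounded hg r).isBigO_symm.comp_tendsto x_tendsto
    have f_dominated := (eval_isTheta_cobounded hf s).isBigO.comp_tendsto hT
    rw [hfg] at g_dominates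
    exact IsBigO.of_pow hf₀
      (g_dominates.trans (f_dominated.congr_left fun t => (h t).symm))
  have f_approx := (eval_sub_pow_isLittleO_cobounded hf hf₀).comp_tendsto hT
  have g_approx := (eval_sub_pow_isLittleO_cobounded hg (hfg ▸ hf₀)).comp_tendsto x_tendsto
  rw [← hr, hfg] at g_approx
  have pow_approx : (fun t => (x t + r) ^ f.natDegree - (T t + s) ^ f.natDegree) =o[U]
      fun t => (T t + s) ^ (f.natDegree - 1) :=
    (f_approx.sub (g_approx.trans_isBigO (x_isBigO.pow _))).congr_left fun t => by
      simp only [Function.comp_apply, h t, ← hs, sub_sub_sub_cancel_left]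
  obtain ⟨ω, hω, tendsto_zero⟩ := exists_pow_eq_one_tendsto_sub_mul hf₀
    ((tendsto_add_const_cobounded s).comp hT) pow_approx
  refine ⟨ω, hω, ?_⟩
  have h := tendsto_zero.add_const (ω * s - r)
  rw [zero_add] at h
  refine h.congr fun t => ?_
  simp only [Function.comp_apply]
  ring

theorem exists_eventually_eq_of_eval_eq {p : ℂ[X]} (hp : p.natDegree ≠ 0) {x : ι → ℂ} {y : ℂ}
    (h : ∀ t, p.eval (x t) = y) : ∃ ξ, p.eval ξ = y ∧ ∀ᶠ t in (U : Filter ι), x t = ξ := by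
  have ne_zero : p - C y ≠ 0 := fun h => hp (by rw [sub_eq_zero.mp h, natDegree_C])
  have mem_rootSet (t : ι) : x t ∈ (p - C y).rootSet ℂ := by
    simp [mem_rootSet_of_ne ne_zero, h t]
  obtain ⟨ξ, hξ, hxξ⟩ := (Ultrafilter.eventually_exists_mem_iff
    ((p - C y).rootSet_finite ℂ) (P := fun ξ t => x t = ξ) (f := U)).mp
    (.of_forall fun t => ⟨x t, mem_rootSet t, rfl⟩)
  obtain ⟨t, rfl⟩ := hxξ.exists
  exact ⟨x t, h t, hxξ⟩

theorem eq_one_and_eq_of_tendsto_mul {ω ω' κ : ℂ} {m n : ℕ} (hmn : m.Coprime n) (hω : ω ^ m = 1)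
    (hω' : ω' ^ n = 1) {T : ι → ℂ} (hT : Tendsto T U (cobounded ℂ))
    (h : Tendsto (fun t => (ω - ω') * T t) U (𝓝 κ)) : ω = 1 ∧ ω' = 1 := by
  rcases eq_or_ne ω ω' with rfl | hne
  · have := (pow_eq_one_iff_of_coprime hmn).mp ⟨hω, hω'⟩
    exact ⟨this, this⟩
  · have tendsto_cobounded := (tendsto_mul_left_cobounded (sub_ne_zero.mpr hne)).comp hT
    exact (h.not_tendsto (Metric.disjoint_nhds_cobounded κ) tendsto_cobounded).elim

theorem eq_add_of_eval_eq {f f' g g' : ℂ[X]} (hf : f.Monic) (hf' : f'.Monic) (hg : g.Monic)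
    (hg' : g'.Monic) (hf₀ : f.natDegree ≠ 0) (hf'₀ : f'.natDegree ≠ 0)
    (hfg : g.natDegree = f.natDegree) (hfg' : g'.natDegree = f'.natDegree)
    (hff' : f.natDegree.Coprime f'.natDegree) {T x x' : ι → ℂ} {R S : ℂ}
    (hT : Tendsto T U (cobounded ℂ)) (hx : ∀ t, g.eval (x t) = f.eval (T t))
    (hx' : ∀ t, g'.eval (x' t) = f'.eval (R - T t))
    (hadd : ∀ᶠ t in (U : Filter ι), x t + x' t = S) :
    S = R + (f.nextCoeff / f.natDegree - g.nextCoeff / g.natDegree) +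
      (f'.nextCoeff / f'.natDegree - g'.nextCoeff / g'.natDegree) := by
  obtain ⟨ω, hω, tendsto_x⟩ := exists_tendsto_sub_mul_of_eval_eq hf hg hf₀ hfg hT hx
  obtain ⟨ω', hω', tendsto_x'⟩ := exists_tendsto_sub_mul_of_eval_eq hf' hg' hf'₀ hfg'
    ((tendsto_const_sub_cobounded R).comp hT) hx'
  have tendsto_add := tendsto_x.add tendsto_x'
  have tendsto_mul := (tendsto_add.const_sub (S - ω' * R)).congr' (f₂ := fun t => (ω - ω') * T t)
    (hadd.mono fun t ht => by
      simp only [Function.comp_apply]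
      linear_combination -ht)
  obtain ⟨rfl, rfl⟩ := eq_one_and_eq_of_tendsto_mul hff' hω hω' hT tendsto_mul
  rw [sub_self] at tendsto_mul
  have limit_eq :=
    tendsto_nhds_unique (tendsto_mul.congr fun t => zero_mul (T t)) tendsto_const_nhds
  linear_combination limit_eq

theorem exists_eventually_forall_eq_of_eval_eq {J : Type*} {p : J → ℂ[X]}
    (hp : ∀ j, (p j).natDegree ≠ 0) {s : Finset J} {x : ι → J → ℂ} {y : J → ℂ}
    (h : ∀ t, ∀ j ∈ s, (p j).eval (x t j) = y j) : ∃ ξ : J → ℂ,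
      (∀ j ∈ s, (p j).eval (ξ j) = y j) ∧ ∀ᶠ t in (U : Filter ι), ∀ j ∈ s, x t j = ξ j := by
  choose! ξ eval_ξ x_eq using fun j hj => exists_eventually_eq_of_eval_eq (U := U) (hp j)
    fun t => h t j hj
  exact ⟨ξ, eval_ξ, (Filter.eventually_all_finset s).mpr x_eq⟩

variable {J : Type*} [Fintype J] {f g : J → ℂ[X]} {lam : ℂ}

theorem exists_sum_sub_eq_of_sum_matching [DecidableEq J] (hf : ∀ j, (f j).Monic)
    (hg : ∀ j, (g j).Monic) (hf₀ : ∀ j, (f j).natDegree ≠ 0)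
    (hfg : ∀ j, (g j).natDegree = (f j).natDegree) {a b : J} (hab : a ≠ b)
    (hcop : (f a).natDegree.Coprime (f b).natDegree)
    (H : ∀ l : J → ℂ, ∑ j, l j = lam →
      ∃ x : J → ℂ, ∑ j, x j = lam ∧ ∀ j, (g j).eval (x j) = (f j).eval (l j)) :
    ∃ c, ∀ l : J → ℂ, ∃ ξ : J → ℂ,
      (∀ j ∈ ({a, b} : Finset J)ᶜ, (g j).eval (ξ j) = (f j).eval (l j)) ∧
        ∑ j ∈ ({a, b} : Finset J)ᶜ, (ξ j - l j) = c := by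
  refine ⟨((g a).nextCoeff / (g a).natDegree - (f a).nextCoeff / (f a).natDegree) +
    ((g b).nextCoeff / (g b).natDegree - (f b).nextCoeff / (f b).natDegree), fun l => ?_⟩
  have sum_split (x : J → ℂ) : ∑ j, x j = x a + x b + ∑ j ∈ ({a, b} : Finset J)ᶜ, x j := by
    rw [← Finset.sum_add_sum_compl {a, b}, Finset.sum_pair hab]
  let R : ℂ := lam - ∑ j ∈ ({a, b} : Finset J)ᶜ, l j
  let L (T : ℂ) : J → ℂ := Function.update (Function.update l a T) b (R - T)
  have L_left (T : ℂ) : L T a = T := by simp [L, hab]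
  have L_right (T : ℂ) : L T b = R - T := by simp [L]
  have L_compl (T : ℂ) {j : J} (hj : j ∈ ({a, b} : Finset J)ᶜ) : L T j = l j := by
    simp only [Finset.mem_compl, Finset.mem_insert, Finset.mem_singleton, not_or] at hj
    simp [L, hj]
  have sum_L (T : ℂ) : ∑ j, L T j = lam := by
    rw [sum_split, L_left, L_right, Finset.sum_congr rfl fun j hj => L_compl T hj]
    ring
  choose x sum_x eval_x using fun T => H (L T) (sum_L T)
  let U : Ultrafilter ℂ := Ultrafilter.of (cobounded ℂ)
  have hU : Tendsto id U (cobounded ℂ) := Ultrafilter.of_le _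
  obtain ⟨ξ, eval_ξ, x_eq⟩ := exists_eventually_forall_eq_of_eval_eq (U := U) (p := g)
    (y := fun j => (f j).eval (l j)) (fun j => hfg j ▸ hf₀ j)
    fun T j hj => (eval_x T j).trans (by rw [L_compl T hj])
  refine ⟨ξ, eval_ξ, ?_⟩
  have eventually_sum : ∀ᶠ T in (U : Filter ℂ),
      x T a + x T b = lam - ∑ j ∈ ({a, b} : Finset J)ᶜ, ξ j := by
    filter_upwards [x_eq] with T hT
    rw [← sum_x T, sum_split (x T), Finset.sum_congr rfl hT, add_sub_cancel_right]
  have limit_eq := eq_add_of_eval_eq (hf a) (hf b) (hg a) (hg b) (hf₀ a) (hf₀ b) (hfg a) (hfg b)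
    hcop hU (fun T => (eval_x T a).trans (by rw [L_left, id]))
    (fun T => (eval_x T b).trans (by rw [L_right, id])) eventually_sum
  rw [Finset.sum_sub_distrib]
  linear_combination -limit_eq

theorem exists_eq_comp_X_add_C_of_sum_matching (hf : ∀ j, (f j).Monic) (hg : ∀ j, (g j).Monic)
    (hf₀ : ∀ j, (f j).natDegree ≠ 0) (hfg : ∀ j, (g j).natDegree = (f j).natDegree) {a b i : J}
    (hab : a ≠ b) (hia : i ≠ a) (hib : i ≠ b) (hcop : (f a).natDegree.Coprime (f b).natDegree)
    (H : ∀ l : J → ℂ, ∑ j, l j = lam →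
      ∃ x : J → ℂ, ∑ j, x j = lam ∧ ∀ j, (g j).eval (x j) = (f j).eval (l j)) :
    ∃ c, f i = (g i).comp (X + C c) := by
  classical
  obtain ⟨c, hc⟩ := exists_sum_sub_eq_of_sum_matching hf hg hf₀ hfg hab hcop H
  choose x eval_x sum_x using fun s => hc (Pi.single i s)
  have i_mem : i ∈ ({a, b} : Finset J)ᶜ := by simp [hia, hib]
  obtain ⟨ξ, -, x_eq⟩ := exists_eventually_forall_eq_of_eval_eq (U := hyperfilter ℂ)
    (p := g) (s := ({a, b} : Finset J)ᶜ.erase i) (x := x) (y := fun j => (f j).eval 0)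
    (fun j => hfg j ▸ hf₀ j) fun s j hj => by
      rw [eval_x s j (Finset.mem_of_mem_erase hj), Pi.single_eq_of_ne (Finset.ne_of_mem_erase hj)]
  refine ⟨c - ∑ j ∈ ({a, b} : Finset J)ᶜ.erase i, ξ j, eq_of_infinite_eval_eq _ _ ?_⟩
  have eventually_eq : ∀ᶠ s in (hyperfilter ℂ : Filter ℂ), (f i).eval s =
      ((g i).comp (X + C (c - ∑ j ∈ ({a, b} : Finset J)ᶜ.erase i, ξ j))).eval s := by
    filter_upwards [x_eq] with s hs
    have sum_s := sum_x s
    rw [← Finset.add_sum_erase _ _ i_mem, Pi.single_eq_same, Finset.sum_congr rfl fun j hj => by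
      rw [hs j hj, Pi.single_eq_of_ne (Finset.ne_of_mem_erase hj), sub_zero]] at sum_s
    have eval_i := eval_x s i i_mem
    rw [Pi.single_eq_same] at eval_i
    rw [eval_comp, eval_add, eval_X, eval_C, ← eval_i, ← sum_s]
    congr 1
    ring
  exact frequently_cofinite_iff_infinite.mp
    (eventually_eq.frequently.filter_mono hyperfilter_le_cofinite)

end Matching

section Rigidity

open Matrix

theorem det_sub_smul_one_eq_eval_charpoly {n R : Type*} [Fintype n] [DecidableEq n] [CommRing R]
    (M : Matrix n n R) (t : R) :
    (M - t • (1 : Matrix n n R)).det = (-1) ^ Fintype.card n * M.charpoly.eval t := by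
  rw [eval_charpoly, ← det_neg, neg_sub, scalar_apply, smul_one_eq_diagonal]

theorem eval_charpoly_eq_of_det_eq_zero {q : ℕ} [NeZero q] {v y : ℤ → ℝ} {z l x : ℂ} (hz : z ≠ 0)
    (hv : (floquetMatrixOne q v z - l • (1 : Matrix (Fin q) (Fin q) ℂ)).det = 0)
    (hy : (floquetMatrixOne q y z - x • (1 : Matrix (Fin q) (Fin q) ℂ)).det = 0) :
    (floquetMatrixOne q y 1).charpoly.eval x = (floquetMatrixOne q v 1).charpoly.eval l := by
  have det_one_eq : (floquetMatrixOne q y 1 - x • (1 : Matrix (Fin q) (Fin q) ℂ)).det =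
      (floquetMatrixOne q v 1 - l • (1 : Matrix (Fin q) (Fin q) ℂ)).det := by
    linear_combination hy - hv + det_floquetMatrixOne_sub_det_one (q := q) v l hz -
      det_floquetMatrixOne_sub_det_one (q := q) y x hz
  rw [det_sub_smul_one_eq_eval_charpoly, det_sub_smul_one_eq_eval_charpoly] at det_one_eq
  exact mul_left_cancel₀ (pow_ne_zero _ (neg_ne_zero.mpr one_ne_zero)) det_one_eq

theorem exists_charpoly_floquetMatrixOne_eq_comp {d : ℕ} {q : Fin d → ℕ} [∀ j, NeZero (q j)]
    (hd : 3 ≤ d) (hco : Pairwise (Nat.Coprime on q)) {v y : Fin d → ℤ → ℝ} {lam : ℂ}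
    (hdet : ∀ z : Fin d → ℂ, (∀ j, z j ≠ 0) →
      floquetDet d q (fun n => ∑ j, v j (n j)) z lam = 0 →
        floquetDet d q (fun n => ∑ j, y j (n j)) z lam = 0) (i : Fin d) :
    ∃ c, (floquetMatrixOne (q i) (v i) 1).charpoly =
      (floquetMatrixOne (q i) (y i) 1).charpoly.comp (X + C c) := by
  have card_erase : 1 < (Finset.univ.erase i).card := by
    rw [Finset.card_erase_of_mem (Finset.mem_univ i), Finset.card_fin]
    omega
  obtain ⟨a, ha, b, hb, hab⟩ := Finset.one_lt_card.mp card_erase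
  refine exists_eq_comp_X_add_C_of_sum_matching (lam := lam)
    (f := fun j => (floquetMatrixOne (q j) (v j) 1).charpoly)
    (g := fun j => (floquetMatrixOne (q j) (y j) 1).charpoly)
    (fun _ => charpoly_monic _) (fun _ => charpoly_monic _) (fun j => by simp [NeZero.ne])
    (fun j => by simp) hab (Finset.ne_of_mem_erase ha).symm (Finset.ne_of_mem_erase hb).symm
    (by simpa using hco hab) fun l sum_l => ?_
  choose z z_ne det_v using fun j =>
    exists_det_floquetMatrixOne_eq_zero (q := q j) (v j) (l j)
  have det_V : floquetDet d q (fun n => ∑ j, v j (n j)) z lam = 0 := by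
    rw [floquetDet, floquetMatrix_sum_eq_kroneckerSum, ← sum_l]
    exact det_kroneckerSum_sub_smul_one_eq_zero _ det_v
  have det_Y := hdet z z_ne det_V
  rw [floquetDet, floquetMatrix_sum_eq_kroneckerSum] at det_Y
  obtain ⟨x, sum_x, det_y⟩ := exists_det_eq_zero_of_det_kroneckerSum_sub_smul_one_eq_zero _ det_Y
  exact ⟨x, sum_x, fun j => eval_charpoly_eq_of_det_eq_zero (z_ne j) (det_v j) (det_y j)⟩

variable {q : ℕ}

theorem dftOne_zero (v : ℤ → ℝ) :
    dftOne q v 0 = (((∑ m : Fin q, v (m : ℕ)) / q : ℝ) : ℂ) := by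
  simp [dftOne, div_eq_inv_mul]

theorem trace_floquetMatrixOne_sub_trace (v y : ℤ → ℝ) (z : ℂ) :
    (floquetMatrixOne q y z).trace - (floquetMatrixOne q v z).trace =
      q * (dftOne q y 0 - dftOne q v 0) := by
  simp [floquetMatrixOne, trace, Finset.sum_add_distrib, mul_sub]

variable [NeZero q]

theorem floquetMatrixOne_add_const (v : ℤ → ℝ) (c : ℝ) (z : ℂ) :
    floquetMatrixOne q (fun m => v m + c) z =
      floquetMatrixOne q v z + (c : ℂ) • (1 : Matrix (Fin q) (Fin q) ℂ) := by
  ext m m'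
  have q_ne : (q : ℂ) ≠ 0 := NeZero.ne _
  have dft_add : dftOne q (fun m => v m + c) ((m : ℕ) - (m' : ℕ)) =
      dftOne q v ((m : ℕ) - (m' : ℕ)) + if m = m' then (c : ℂ) else 0 := by
    simp only [dftOne, Complex.ofReal_add, add_mul, Finset.sum_add_distrib, ← Finset.mul_sum,
      sum_character_mul, dvd_neg, dvd_natCast_sub_natCast_iff, mul_add]
    split_ifs
    · field_simp
    · simp
  simp [floquetMatrixOne, dft_add, Matrix.one_apply, add_assoc]

theorem eq_dftOne_sub_of_charpoly_eq_comp {v y : ℤ → ℝ} {c : ℂ}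
    (h : (floquetMatrixOne q v 1).charpoly = (floquetMatrixOne q y 1).charpoly.comp (X + C c)) :
    c = dftOne q y 0 - dftOne q v 0 := by
  rw [← charpoly_sub_scalar] at h
  have trace_eq : (floquetMatrixOne q v 1).trace = (floquetMatrixOne q y 1).trace - q * c := by
    rw [trace_eq_neg_charpoly_nextCoeff, h, ← trace_eq_neg_charpoly_nextCoeff, trace_sub]
    simp
  refine mul_left_cancel₀ (NeZero.ne (q : ℂ)) ?_
  rw [← trace_floquetMatrixOne_sub_trace v y 1, trace_eq, sub_sub_cancel]

theorem floquetIsospectral_of_charpoly_eq_comp {v y : ℤ → ℝ} {c : ℝ}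
    (h : (floquetMatrixOne q v 1).charpoly =
      (floquetMatrixOne q y 1).charpoly.comp (X + C (c : ℂ))) :
    FloquetIsospectral 1 (fun _ => q) (fun m => v (m 0) + c) (fun m => y (m 0)) := by
  intro z hz lam
  have shift : (floquetMatrixOne q v 1).charpoly.eval (lam - c) =
      (floquetMatrixOne q y 1).charpoly.eval lam := by
    simp [h]
  have add_sub_eq : floquetMatrixOne q (fun m => v m + c) (z 0) - lam • 1 =
      floquetMatrixOne q v (z 0) - (lam - c) • (1 : Matrix (Fin q) (Fin q) ℂ) := by
    rw [floquetMatrixOne_add_const, sub_smul]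
    abel
  rw [floquetDet_one (fun m => v m + c), floquetDet_one y, add_sub_eq,
    sub_eq_iff_eq_add.mp (det_floquetMatrixOne_sub_det_one v _ (hz 0)),
    sub_eq_iff_eq_add.mp (det_floquetMatrixOne_sub_det_one y _ (hz 0)),
    det_sub_smul_one_eq_eval_charpoly, det_sub_smul_one_eq_eval_charpoly, shift]

theorem exists_floquetIsospectral_of_charpoly_eq_comp {v y : ℤ → ℝ} {c : ℂ}
    (h : (floquetMatrixOne q v 1).charpoly = (floquetMatrixOne q y 1).charpoly.comp (X + C c)) :
    ∃ r : ℝ, FloquetIsospectral 1 (fun _ => q) (fun m => v (m 0) + r) (fun m => y (m 0)) := by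
  refine ⟨(∑ m : Fin q, y (m : ℕ)) / q - (∑ m : Fin q, v (m : ℕ)) / q, ?_⟩
  refine floquetIsospectral_of_charpoly_eq_comp ?_
  rw [h, Complex.ofReal_sub, ← dftOne_zero, ← dftOne_zero, ← eq_dftOne_sub_of_charpoly_eq_comp h]

end Rigidity

end FermiRigidity

theorem fermi_isospectral_completely_separable_rigidity_general
    {d : ℕ} (hd : 3 ≤ d) {q : Fin d → ℕ} (hq : ∀ j, 0 < q j)
    (hco : ∀ i j : Fin d, i ≠ j → Nat.Coprime (q i) (q j))
    {V Y : (Fin d → ℤ) → ℝ} (hVper : IsPeriodicPotential d q V) {lam0 : ℂ}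
    (hdet : ∀ z : Fin d → ℂ, (∀ j, z j ≠ 0) →
      floquetDet d q V z lam0 = 0 → floquetDet d q Y z lam0 = 0)
    (Yj : Fin d → ℤ → ℝ) (hYsep : ∀ n : Fin d → ℤ, Y n = ∑ j, Yj j (n j)) :
    ∃ Vj : Fin d → ℤ → ℝ,
      (∀ n : Fin d → ℤ, V n = ∑ j, Vj j (n j)) ∧
      ∀ j : Fin d, ∃ C : ℝ,
        FloquetIsospectral 1 (fun _ => q j)
          (fun m => Vj j (m 0) + C) (fun m => Yj j (m 0)) := by
  have : ∀ j, NeZero (q j) := fun j => ⟨(hq j).ne'⟩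
  obtain rfl : Y = fun n => ∑ j, Yj j (n j) := funext hYsep
  obtain ⟨Vj, hVj⟩ := FermiRigidity.exists_separation_of_floquetDet_imp hd hco hVper Yj hdet
  obtain rfl : V = fun n => ∑ j, Vj j (n j) := funext hVj
  refine ⟨Vj, hVj, fun j => ?_⟩
  obtain ⟨c, hc⟩ := FermiRigidity.exists_charpoly_floquetMatrixOne_eq_comp hd hco hdet j
  exact FermiRigidity.exists_floquetIsospectral_of_charpoly_eq_comp hc

/-- Corollary 1.6: if `V` and `Y` are Fermi isospectral and
`Y = ⊕_{j=1}^d Y_j` is completely separable, then `V = ⊕_{j=1}^d V_j` is completely separable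
and, up to a constant, `V_j` and `Y_j` are Floquet isospectral as `q_jℤ`-periodic potentials
on `ℤ`. -/
theorem fermi_isospectral_completely_separable_rigidity
    (d : ℕ) (hd : 3 ≤ d)
    (q : Fin d → ℕ) (hq : ∀ j, 0 < q j)
    (hco : ∀ i j : Fin d, i ≠ j → Nat.Coprime (q i) (q j))
    (V Y : (Fin d → ℤ) → ℝ)
    (hVper : IsPeriodicPotential d q V) (hYper : IsPeriodicPotential d q Y)
    (hFermi : FermiIsospectral d q V Y)
    (Yj : Fin d → ℤ → ℝ)
    (hYsep : ∀ n : Fin d → ℤ, Y n = ∑ j, Yj j (n j)) :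
    ∃ Vj : Fin d → ℤ → ℝ,
      (∀ n : Fin d → ℤ, V n = ∑ j, Vj j (n j)) ∧
      ∀ j : Fin d, ∃ C : ℝ,
        FloquetIsospectral 1 (fun _ => q j)
          (fun m => Vj j (m 0) + C) (fun m => Yj j (m 0)) := by
  obtain ⟨lam0, hlam⟩ := hFermi
  exact fermi_isospectral_completely_separable_rigidity_general hd hq hco hVper
    (fun z hz h => (hlam.subset ⟨hz, h⟩).2) Yj hYsep

end
end

section
/- Let d ≥ 3 and let q_1, …, q_d be pairwise coprime positive integers. Assume the Γ-periodic potentials V, Y : ℤ^d → ℝ are Fermi isospectral, and that Y depends only on the first d̃ variables for some d̃ < d. Then V depends only on the first d̃ variables. -/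
open scoped BigOperators
open Complex

noncomputable section

/-!
Let `∑ w = 0` and send `z = w / u + s e` to infinity along `u → 0`, where `∑ e = 1`. Every diagonal
entry of the Floquet matrix except the zeroth blows up like `(phase n ⬝ᵥ w) / u`, so by a Schur
complement the Fermi variety has a branch
`s = λ - V̂(0) + u (∑_{n ≠ 0} |V̂(n)|² / (phase n ⬝ᵥ w) - ∑ 1 / w_j) + o(u)`.
Hence the rational function `∑_{n ≠ 0} |V̂(n)|² / (phase n ⬝ᵥ w)` on the hyperplane `∑ w = 0` is a
Fermi invariant. Two of its poles `n` and `l` coincide exactly when `phase n` is an affine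
function of `phase l`. As the `q_j` are coprime, roots of unity belonging to different coordinates
coincide only at `1`; so if `l` has two nonzero coordinates then three phases of `l` are distinct,
and an affine map sending three points of the unit circle to the unit circle is constant or a
rotation, whence `n = l` and `|V̂(l)|` is an invariant. The poles on a coordinate axis all
coincide, but their residues are proportional to `|V̂(n)|² / (ρ_n - 1)`, and
`Re (1 / (ρ - 1)) = -1/2` for `ρ ≠ 1` on the circle; so the sum of `|V̂(n)|²` over the axis is an
invariant too. These invariants detect whether `V̂` vanishes at all `l` with `l_j ≠ 0`, that is,
whether `V` depends on the `j`-th variable.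
-/

open Filter Matrix
open scoped Topology ComplexConjugate

section UnitCircle

theorem conj_mul_self_of_norm_eq_one {x : ℂ} (hx : ‖x‖ = 1) : conj x * x = 1 := by
  rw [Complex.conj_mul', hx]; norm_num

theorem re_inv_sub_one_of_norm_eq_one {x : ℂ} (hx : ‖x‖ = 1) (hx' : x ≠ 1) :
    ((x - 1)⁻¹).re = -1 / 2 := by
  have hsq : x.re * x.re + x.im * x.im = 1 := by
    rw [← Complex.normSq_apply, Complex.normSq_eq_norm_sq, hx, one_pow]
  have hne : Complex.normSq (x - 1) ≠ 0 := by simpa [sub_eq_zero] using hx'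
  have hnorm : Complex.normSq (x - 1) = -2 * (x.re - 1) := by
    simp only [Complex.normSq_apply, Complex.sub_re, Complex.sub_im, Complex.one_re,
      Complex.one_im]
    linarith
  rw [Complex.inv_re, div_eq_iff hne, hnorm, Complex.sub_re, Complex.one_re]
  ring

theorem quadratic_of_norm_add_mul_eq_one {α β x : ℂ} (hx : ‖x‖ = 1)
    (hαβx : ‖α + β * x‖ = 1) :
    conj α * β * x ^ 2 + (conj α * α + conj β * β - 1) * x + conj β * α = 0 := by
  have h := conj_mul_self_of_norm_eq_one hαβx
  simp only [map_add, map_mul] at h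
  linear_combination x * h - (conj β * α + conj β * β * x) * conj_mul_self_of_norm_eq_one hx

theorem eq_zero_or_eq_zero_of_norm_add_mul_eq_one {α β x y z : ℂ}
    (hxy : x ≠ y) (hxz : x ≠ z) (hyz : y ≠ z) (hx : ‖x‖ = 1) (hy : ‖y‖ = 1) (hz : ‖z‖ = 1)
    (hαβx : ‖α + β * x‖ = 1) (hαβy : ‖α + β * y‖ = 1) (hαβz : ‖α + β * z‖ = 1) :
    α = 0 ∨ β = 0 := by
  have qx := quadratic_of_norm_add_mul_eq_one hx hαβx
  have qy := quadratic_of_norm_add_mul_eq_one hy hαβy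
  have qz := quadratic_of_norm_add_mul_eq_one hz hαβz
  -- A nonzero leading coefficient would give the quadratic three distinct roots.
  have hlead : conj α * β * ((x - y) * (x - z) * (y - z)) = 0 := by
    linear_combination (y - z) * qx - (x - z) * qy + (x - y) * qz
  simpa [sub_eq_zero, hxy, hxz, hyz] using hlead

end UnitCircle

section PartialFractions

variable {𝕜 E ι : Type*} [NontriviallyNormedField 𝕜] [AddCommGroup E] [Module 𝕜 E]

theorem exists_mem_ker_forall_apply_ne_zero [Finite ι] (f : ι → Module.Dual 𝕜 E) (l : ι) :
    ∃ w ∈ LinearMap.ker (f l), ∀ i, ¬ LinearMap.ker (f l) ≤ LinearMap.ker (f i) → f i w ≠ 0 := by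
  obtain ⟨w, hw, hfw⟩ := Module.Dual.exists_forall_mem_ne_zero_of_forall_exists
    (LinearMap.ker (f l)) (fun i : {i // ¬ LinearMap.ker (f l) ≤ LinearMap.ker (f i)} => f i)
    fun i => SetLike.not_le_iff_exists.mp i.2
  exact ⟨w, hw, fun i hi => hfw ⟨i, hi⟩⟩

/-- The residue along the hyperplane `ker (f l)` of a sum of simple fractions that vanishes
identically. -/
theorem sum_div_eq_zero_of_ker_le [Fintype ι] {f : ι → Module.Dual 𝕜 E} {c : ι → 𝕜}
    (hf : ∀ w, (∀ i, f i w ≠ 0) → ∑ i, c i / f i w = 0) (l : ι) {v : E}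
    (hv : ∀ i, f i v ≠ 0) [DecidablePred fun i => LinearMap.ker (f l) ≤ LinearMap.ker (f i)] :
    ∑ i with LinearMap.ker (f l) ≤ LinearMap.ker (f i), c i / f i v = 0 := by
  obtain ⟨w, hwl, hw⟩ := exists_mem_ker_forall_apply_ne_zero f l
  have hcont (i : ι) : ContinuousAt (fun ε : 𝕜 => f i w + ε * f i v) 0 := by fun_prop
  have hne : ∀ᶠ ε in 𝓝[≠] (0 : 𝕜), ∀ i, f i (w + ε • v) ≠ 0 := by
    refine eventually_all.mpr fun i => ?_
    simp only [map_add, map_smul, smul_eq_mul]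
    by_cases hi : LinearMap.ker (f l) ≤ LinearMap.ker (f i)
    · filter_upwards [self_mem_nhdsWithin] with ε hε
      simpa [LinearMap.mem_ker.mp (hi hwl), hv i] using hε
    · exact ((hcont i).eventually_ne (by simpa using hw i hi)).filter_mono nhdsWithin_le_nhds
  have hzero : ∀ᶠ ε in 𝓝[≠] (0 : 𝕜), ∑ i, ε * (c i / f i (w + ε • v)) = 0 := by
    filter_upwards [hne] with ε hε
    rw [← Finset.mul_sum, hf _ hε, mul_zero]
  have hlim (i : ι) : Tendsto (fun ε : 𝕜 => ε * (c i / f i (w + ε • v))) (𝓝[≠] 0)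
      (𝓝 (if LinearMap.ker (f l) ≤ LinearMap.ker (f i) then c i / f i v else 0)) := by
    simp only [map_add, map_smul, smul_eq_mul]
    split_ifs with hi
    · refine tendsto_nhds_of_eventually_eq ?_
      filter_upwards [self_mem_nhdsWithin] with ε hε
      rw [LinearMap.mem_ker.mp (hi hwl), zero_add, ← mul_div_assoc, mul_div_mul_left _ _ hε]
    · have hwi : f i w + 0 * f i v ≠ 0 := by simpa using hw i hi
      have h : ContinuousAt (fun ε : 𝕜 => ε * (c i / (f i w + ε * f i v))) 0 :=
        continuousAt_id.mul (continuousAt_const.div (hcont i) hwi)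
      simpa using h.tendsto.mono_left nhdsWithin_le_nhds
  rw [Finset.sum_filter]
  exact tendsto_nhds_unique (tendsto_finsetSum _ fun i _ => hlim i)
    (tendsto_nhds_of_eventually_eq hzero)

end PartialFractions

section Schur

variable {𝕜 ι : Type*} [Fintype ι] [DecidableEq ι]

theorem diag_eq_of_det_eq_zero [Field 𝕜] {M : Matrix ι ι 𝕜} {i : ι} (hM : M.det = 0)
    (hD : (M.toSquareBlockProp (· ≠ i)).det ≠ 0) :
    M i i = (fun n : {n // n ≠ i} => M i n) ⬝ᵥ
      (M.toSquareBlockProp (· ≠ i))⁻¹ *ᵥ fun n => M n i := by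
  set D := M.toSquareBlockProp (· ≠ i)
  obtain ⟨v, hv0, hv⟩ := exists_mulVec_eq_zero_iff.mpr hM
  have hrow (k : ι) : M k i * v i + ∑ n : {n // n ≠ i}, M k n * v n = 0 := by
    rw [← Fintype.sum_eq_add_sum_subtype_ne fun n => M k n * v n]
    exact congrFun hv k
  have hv' : (fun n : {n // n ≠ i} => v n) = -(v i • D⁻¹ *ᵥ fun n => M n i) := by
    rw [← mulVec_smul, ← mulVec_neg, ← one_mulVec fun n : {n // n ≠ i} => v n,
      ← nonsing_inv_mul D (isUnit_iff_ne_zero.mpr hD), ← mulVec_mulVec]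
    congr 1
    ext n
    exact (eq_neg_of_add_eq_zero_right (hrow n)).trans (by simp [mul_comm])
  have hvi : v i ≠ 0 := fun h => hv0 <| funext fun n => by
    by_cases hn : n = i
    · rw [hn, h, Pi.zero_apply]
    · simpa [h] using congrFun hv' ⟨n, hn⟩
  have hi : M i i * v i + (fun n : {n // n ≠ i} => M i n) ⬝ᵥ (fun n => v n) = 0 := hrow i
  rw [hv', dotProduct_neg, dotProduct_smul, smul_eq_mul, mul_comm, ← sub_eq_add_neg, ← mul_sub,
    mul_eq_zero, sub_eq_zero] at hi
  exact hi.resolve_left hvi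

theorem tendsto_diag_div_of_det_eq_zero [NormedField 𝕜] {α : Type*} {𝓕 : Filter α}
    {N : α → Matrix ι ι 𝕜} {ε : α → 𝕜} {i : ι} {r c H : {n // n ≠ i} → 𝕜}
    (hdet : ∀ᶠ a in 𝓕, (N a).det = 0)
    (hr : Tendsto (fun a n => N a i (n : {n // n ≠ i})) 𝓕 (𝓝 r))
    (hc : Tendsto (fun a n => N a (n : {n // n ≠ i}) i / ε a) 𝓕 (𝓝 c))
    (hN : Tendsto (fun a => (N a).toSquareBlockProp (· ≠ i)) 𝓕 (𝓝 (diagonal H)))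
    (hH : ∀ n, H n ≠ 0) :
    Tendsto (fun a => N a i i / ε a) 𝓕 (𝓝 (∑ n, r n * c n / H n)) := by
  have hdetH : (diagonal H).det ≠ 0 := by
    rw [det_diagonal]; exact Finset.prod_ne_zero_iff.mpr fun n _ => hH n
  have hinv : (diagonal H)⁻¹ = diagonal H⁻¹ :=
    inv_eq_left_inv <| by simp [hH]
  have hdetN : ∀ᶠ a in 𝓕, ((N a).toSquareBlockProp (· ≠ i)).det ≠ 0 :=
    ((continuous_id.matrix_det.tendsto _).comp hN).eventually_ne hdetH
  have hdiv : ∀ᶠ a in 𝓕, (fun n : {n // n ≠ i} => N a i n) ⬝ᵥ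
      ((N a).toSquareBlockProp (· ≠ i))⁻¹ *ᵥ (fun n => N a n i / ε a) = N a i i / ε a := by
    filter_upwards [hdet, hdetN] with a ha ha'
    have hcol : (fun n : {n // n ≠ i} => N a n i / ε a) = (ε a)⁻¹ •
        fun n : {n // n ≠ i} => N a n i := by
      ext n; simp [div_eq_inv_mul]
    rw [hcol, mulVec_smul, dotProduct_smul, ← diag_eq_of_det_eq_zero ha ha', smul_eq_mul,
      div_eq_inv_mul]
  have hlim : r ⬝ᵥ (diagonal H)⁻¹ *ᵥ c = ∑ n, r n * c n / H n := by
    simp only [hinv, dotProduct, mulVec_diagonal, Pi.inv_apply]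
    exact Finset.sum_congr rfl fun n _ => by ring
  have hcontInv : ContinuousAt Inv.inv (diagonal H) :=
    continuousAt_matrix_inv _ <| by simpa using! continuousAt_inv₀ hdetH
  have hcont : Continuous fun p : ({n // n ≠ i} → 𝕜) × Matrix {n // n ≠ i} {n // n ≠ i} 𝕜 ×
      ({n // n ≠ i} → 𝕜) => p.1 ⬝ᵥ p.2.1 *ᵥ p.2.2 := by fun_prop
  rw [← hlim]
  exact ((hcont.tendsto _).comp
    (hr.prodMk_nhds ((hcontInv.tendsto.comp hN).prodMk_nhds hc))).congr' hdiv

end Schur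

section Implicit

theorem exists_tendsto_eventually_eq_zero {𝕜 : Type*} [RCLike 𝕜] {F : 𝕜 × 𝕜 → 𝕜} {u s c : 𝕜}
    (hF : ContDiffAt 𝕜 1 F (u, s)) (h0 : F (u, s) = 0)
    (hc : HasDerivAt (fun t => F (u, t)) c s) (hc0 : c ≠ 0) :
    ∃ ψ : 𝕜 → 𝕜, Tendsto ψ (𝓝 u) (𝓝 s) ∧ ∀ᶠ x in 𝓝 u, F (x, ψ x) = 0 := by
  have hcomp : HasDerivAt (fun t => F (u, t)) ((fderiv 𝕜 F (u, s) ∘L .inr 𝕜 𝕜 𝕜) 1) s :=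
    ((hF.differentiableAt one_ne_zero).hasFDerivAt.comp s
      (hasFDerivAt_prodMk_right u s)).hasDerivAt
  have hinv : (fderiv 𝕜 F (u, s) ∘L .inr 𝕜 𝕜 𝕜).IsInvertible := by
    refine ⟨ContinuousLinearEquiv.unitsEquivAut 𝕜 (Units.mk0 c hc0), ?_⟩
    ext
    simpa using hc.unique hcomp
  refine ⟨hF.implicitFunction one_ne_zero hinv,
    (hF.hasStrictFDerivAt one_ne_zero).tendsto_implicitFunctionOfProdDomain hinv, ?_⟩
  simpa only [h0] using hF.eventually_apply_implicitFunction one_ne_zero hinv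

theorem contDiffAt_det {𝕜 E ι : Type*} [NontriviallyNormedField 𝕜] [NormedAddCommGroup E]
    [NormedSpace 𝕜 E] [Fintype ι] [DecidableEq ι] {N : E → Matrix ι ι 𝕜} {x : E} {k : WithTop ℕ∞}
    (hN : ∀ i j, ContDiffAt 𝕜 k (fun y => N y i j) x) :
    ContDiffAt 𝕜 k (fun y => (N y).det) x := by
  simp only [det_apply']
  exact ContDiffAt.sum fun σ _ => contDiffAt_const.mul (contDiffAt_prod fun i _ => hN _ _)

theorem exists_tendsto_eventually_det_eq_zero {𝕜 ι : Type*} [RCLike 𝕜] [Fintype ι]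
    [DecidableEq ι] {N : 𝕜 × 𝕜 → Matrix ι ι 𝕜} {i : ι} {u s : 𝕜} {H : {n // n ≠ i} → 𝕜}
    (hN : ∀ n m, ContDiffAt 𝕜 1 (fun p => N p n m) (u, s))
    (hdiag : ∀ t, N (u, t) i i = t - s) (hcol : ∀ t, ∀ n ≠ i, N (u, t) n i = 0)
    (hblock : ∀ t, (N (u, t)).toSquareBlockProp (· ≠ i) = diagonal H) (hH : ∀ n, H n ≠ 0) :
    ∃ ψ : 𝕜 → 𝕜, Tendsto ψ (𝓝 u) (𝓝 s) ∧ ∀ᶠ x in 𝓝 u, (N (x, ψ x)).det = 0 := by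
  have hdet (t : 𝕜) : (N (u, t)).det = (t - s) * ∏ n, H n := by
    rw [twoBlockTriangular_det _ (· = i) fun n hn m hm => hm ▸ hcol t n hn, ← det_diagonal,
      ← hblock t, ← hdiag t]
    congr 1
    convert det_eq_elem_of_subsingleton _ (⟨i, rfl⟩ : {n // n = i})
    rfl
  refine exists_tendsto_eventually_eq_zero (c := ∏ n, H n) (contDiffAt_det hN)
    (by simp [hdet]) ?_ (Finset.prod_ne_zero_iff.mpr fun n _ => hH n)
  simpa [hdet] using ((hasDerivAt_id s).sub_const s).mul_const (∏ n, H n)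

end Implicit

section Fourier

variable {d : ℕ} {q : Fin d → ℕ}

theorem rho_eq_stdAddChar (j : Fin d) [NeZero (q j)] (m : ℤ) :
    rho d q j m = ZMod.stdAddChar (m : ZMod (q j)) := (ZMod.stdAddChar_coe m).symm

theorem rho_zero (j : Fin d) : rho d q j 0 = 1 := by simp [rho]

theorem rho_add (j : Fin d) (m n : ℤ) : rho d q j (m + n) = rho d q j m * rho d q j n := by
  simp only [rho, ← Complex.exp_add, Int.cast_add]
  ring_nf

theorem norm_rho (j : Fin d) (m : ℤ) : ‖rho d q j m‖ = 1 := by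
  rw [rho, Complex.norm_exp]
  simp [Complex.div_re]

theorem rho_ne_zero (j : Fin d) (m : ℤ) : rho d q j m ≠ 0 := Complex.exp_ne_zero _

theorem rho_neg (j : Fin d) (m : ℤ) : rho d q j (-m) = (rho d q j m)⁻¹ :=
  eq_inv_of_mul_eq_one_left <| by rw [← rho_add, neg_add_cancel, rho_zero]

theorem conj_rho (j : Fin d) (m : ℤ) : conj (rho d q j m) = rho d q j (-m) := by
  rw [rho_neg, Complex.inv_eq_conj (norm_rho j m)]

theorem rho_nat_mul (j : Fin d) (k : ℕ) (m : ℤ) : rho d q j (k * m) = rho d q j m ^ k := by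
  simp only [rho, ← Complex.exp_nat_mul, Int.cast_mul, Int.cast_natCast]
  ring_nf

theorem rho_eq_one_iff (j : Fin d) [NeZero (q j)] (m : ℤ) :
    rho d q j m = 1 ↔ (q j : ℤ) ∣ m := by
  rw [rho_eq_stdAddChar, ← AddChar.map_zero_eq_one (ZMod.stdAddChar (N := q j)),
    ZMod.injective_stdAddChar.eq_iff, ZMod.intCast_zmod_eq_zero_iff_dvd]

theorem rho_fin_injective (j : Fin d) [NeZero (q j)] :
    Function.Injective fun k : Fin (q j) => rho d q j (k : ℕ) := fun k l h => by
  simp only [rho_eq_stdAddChar, ZMod.injective_stdAddChar.eq_iff, Int.cast_natCast,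
    ZMod.natCast_eq_natCast_iff', Nat.mod_eq_of_lt k.2, Nat.mod_eq_of_lt l.2] at h
  exact Fin.ext h

theorem rho_pow_eq_one (j : Fin d) [NeZero (q j)] (m : ℤ) : rho d q j m ^ q j = 1 := by
  rw [← rho_nat_mul, rho_eq_one_iff]
  exact dvd_mul_right _ m

theorem sum_rho_mul (j : Fin d) [NeZero (q j)] (m : ℤ) :
    ∑ k : Fin (q j), rho d q j ((k : ℕ) * m) = if (q j : ℤ) ∣ m then (q j : ℂ) else 0 := by
  simp only [rho_nat_mul, ← rho_eq_one_iff]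
  rw [Fin.sum_univ_eq_sum_range fun k => rho d q j m ^ k]
  split_ifs with h
  · simp [h]
  · have hgeom := mul_neg_geom_sum (rho d q j m) (q j)
    rw [rho_pow_eq_one, sub_self] at hgeom
    exact (mul_eq_zero.mp hgeom).resolve_left (sub_ne_zero.mpr (Ne.symm h))

theorem rho_eq_one_of_eq_of_coprime {i j : Fin d} [NeZero (q i)] [NeZero (q j)]
    (hij : (q i).Coprime (q j)) {m n : ℤ} (h : rho d q i m = rho d q j n) : rho d q i m = 1 :=
  orderOf_eq_one_iff.mp <| Nat.eq_one_of_dvd_coprimes hij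
    (orderOf_dvd_of_pow_eq_one (rho_pow_eq_one i m))
    (orderOf_dvd_of_pow_eq_one (h ▸ rho_pow_eq_one j n))

/-- The character `n ↦ exp (2πi ∑ l_j n_j / q_j)` of `ℤ^d`, in terms of which `dft` is the usual
Fourier transform. -/
def fourierChar (q : Fin d → ℕ) (l n : Fin d → ℤ) : ℂ := ∏ j, rho d q j (l j * n j)

theorem fourierChar_add (l m n : Fin d → ℤ) :
    fourierChar q l (m + n) = fourierChar q l m * fourierChar q l n := by
  simp [fourierChar, mul_add, rho_add, Finset.prod_mul_distrib]

theorem fourierChar_single (l : Fin d → ℤ) (j : Fin d) :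
    fourierChar q l (Pi.single j 1) = rho d q j (l j) := by
  rw [fourierChar, Finset.prod_eq_single j] <;> simp +contextual [rho_zero]

theorem fourierChar_eq_one [∀ j, NeZero (q j)] (l : Fin d → ℤ) {γ : Fin d → ℤ}
    (hγ : ∀ j, (q j : ℤ) ∣ γ j) : fourierChar q l γ = 1 :=
  Finset.prod_eq_one fun j _ => (rho_eq_one_iff j _).mpr ((hγ j).mul_left (l j))

/-- The representative of a point of the fundamental domain in `ℤ^d`. -/
def Cell.toInt (n : Cell d q) : Fin d → ℤ := fun j => (n j : ℕ)

/-- The point of the fundamental domain congruent to `m` modulo `Γ`. -/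
def Cell.ofInt [∀ j, NeZero (q j)] (m : Fin d → ℤ) : Cell d q :=
  fun j => Fin.ofNat (q j) (m j % q j).toNat

theorem dft_eq_sum_fourierChar (X : (Fin d → ℤ) → ℝ) (l : Fin d → ℤ) :
    dft d q X l = (∏ j, (q j : ℂ))⁻¹ *
      ∑ n : Cell d q, (X (Cell.toInt n) : ℂ) * fourierChar q l (-Cell.toInt n) := by
  simp only [dft, fourierChar, rho, ← Complex.exp_sum, one_div]
  congr! 4 with n
  rw [Finset.mul_sum]
  refine Finset.sum_congr rfl fun j _ => ?_
  simp only [Pi.neg_apply, Cell.toInt]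
  push_cast
  ring

theorem dft_neg (X : (Fin d → ℤ) → ℝ) (l : Fin d → ℤ) : dft d q X (-l) = conj (dft d q X l) := by
  simp only [dft_eq_sum_fourierChar, fourierChar, map_mul, map_inv₀, map_prod, map_sum,
    Complex.conj_ofReal, map_natCast, conj_rho, Pi.neg_apply, neg_mul]

section

variable [∀ j, NeZero (q j)]

theorem Cell.toInt_zero : Cell.toInt (0 : Cell d q) = 0 := rfl

theorem Cell.dvd_toInt_iff {n : Cell d q} {j : Fin d} : (q j : ℤ) ∣ Cell.toInt n j ↔ n j = 0 := by
  rw [Cell.toInt, Int.natCast_dvd_natCast]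
  exact ⟨fun h => Fin.ext (Nat.eq_zero_of_dvd_of_lt h (n j).2), fun h => by simp [h]⟩

theorem sum_fourierChar (m : Fin d → ℤ) : ∑ l : Cell d q, fourierChar q (Cell.toInt l) m =
    if ∀ j, (q j : ℤ) ∣ m j then ∏ j, (q j : ℂ) else 0 := by
  simp only [fourierChar]
  have h := Finset.prod_univ_sum (fun j => (Finset.univ : Finset (Fin (q j))))
    fun j k => rho d q j ((k : ℕ) * m j)
  simp only [sum_rho_mul, Fintype.piFinset_univ] at h
  refine h.symm.trans ?_
  simp [Finset.prod_ite_zero]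

theorem sum_dft (X : (Fin d → ℤ) → ℝ) : ∑ l : Cell d q, dft d q X (Cell.toInt l) = X 0 := by
  have hdvd (n : Cell d q) : (∀ j, (q j : ℤ) ∣ (-Cell.toInt n) j) ↔ n = 0 := by
    simp only [Pi.neg_apply, dvd_neg, Cell.dvd_toInt_iff, funext_iff, Pi.zero_apply]
  have hq : ∏ j, (q j : ℂ) ≠ 0 :=
    Finset.prod_ne_zero_iff.mpr fun j _ => Nat.cast_ne_zero.mpr (NeZero.ne (q j))
  simp only [dft_eq_sum_fourierChar, ← Finset.mul_sum]
  rw [Finset.sum_comm]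
  simp only [← Finset.mul_sum, sum_fourierChar, hdvd, mul_ite, mul_zero, Finset.sum_ite_eq',
    Finset.mem_univ, if_true]
  rw [mul_comm, mul_assoc, mul_inv_cancel₀ hq, mul_one, Cell.toInt_zero]

theorem Cell.toInt_add_ofInt (n : Cell d q) (m : Fin d → ℤ) (j : Fin d) :
    Cell.toInt (n + Cell.ofInt m) j ≡ Cell.toInt n j + m j [ZMOD q j] := by
  have hm : 0 ≤ m j % q j := Int.emod_nonneg _ (by exact_mod_cast NeZero.ne (q j))
  simp [Cell.toInt, Cell.ofInt, Fin.val_add, Int.ModEq, hm]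

theorem sum_cell_add {R : Type*} [AddCommMonoid R] {F : (Fin d → ℤ) → R}
    (hF : ∀ n γ : Fin d → ℤ, (∀ j, (q j : ℤ) ∣ γ j) → F (n + γ) = F n) (m : Fin d → ℤ) :
    ∑ n : Cell d q, F (Cell.toInt n + m) = ∑ n : Cell d q, F (Cell.toInt n) := by
  rw [← Equiv.sum_comp (Equiv.addRight (Cell.ofInt m)) fun n => F (Cell.toInt n)]
  refine Finset.sum_congr rfl fun n _ => ?_
  rw [Equiv.coe_addRight, ← sub_add_cancel (Cell.toInt n + m) (Cell.toInt (n + Cell.ofInt m)),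
    add_comm, hF]
  exact fun j => Int.ModEq.dvd (Cell.toInt_add_ofInt n m j)

variable {X : (Fin d → ℤ) → ℝ}

theorem dft_translate (hX : IsPeriodicPotential d q X) (l m : Fin d → ℤ) :
    dft d q (fun n => X (n + m)) l = fourierChar q l m * dft d q X l := by
  have hper (n γ : Fin d → ℤ) (hγ : ∀ j, (q j : ℤ) ∣ γ j) :
      (X (n + γ) : ℂ) * fourierChar q l (-(n + γ)) = X n * fourierChar q l (-n) := by
    rw [hX n γ hγ, neg_add, fourierChar_add,
      fourierChar_eq_one l (γ := -γ) fun j => (hγ j).neg_right, mul_one]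
  have hshift (n : Cell d q) : fourierChar q l (-Cell.toInt n) =
      fourierChar q l m * fourierChar q l (-(Cell.toInt n + m)) := by
    rw [← fourierChar_add]; congr 1; abel
  rw [dft_eq_sum_fourierChar, dft_eq_sum_fourierChar,
    ← sum_cell_add (F := fun n => X n * fourierChar q l (-n)) hper m, mul_left_comm]
  simp only [hshift, mul_left_comm _ (fourierChar q l m), Finset.mul_sum]

theorem fourier_inversion (hX : IsPeriodicPotential d q X) (n : Fin d → ℤ) :
    (X n : ℂ) = ∑ l : Cell d q, fourierChar q (Cell.toInt l) n * dft d q X (Cell.toInt l) := by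
  have h := sum_dft (q := q) fun m => X (m + n)
  simp only [zero_add, dft_translate hX] at h
  exact h.symm

theorem dft_eq_zero_of_dependsOn (hX : IsPeriodicPotential d q X) {s : Set (Fin d)}
    (hs : DependsOn X s) {j : Fin d} (hj : j ∉ s)
    {l : Fin d → ℤ} (hl : ¬ (q j : ℤ) ∣ l j) : dft d q X l = 0 := by
  have hinv : (fun n => X (n + Pi.single j 1)) = X := funext fun n => hs fun i hi => by
    simp [ne_of_mem_of_not_mem hi hj]
  have h := dft_translate hX l (Pi.single j 1)
  rw [hinv, fourierChar_single, eq_comm, mul_left_eq_self₀] at h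
  exact h.resolve_left fun h => hl ((rho_eq_one_iff j _).mp h)

theorem dependsOn_of_dft_eq_zero (hX : IsPeriodicPotential d q X) {s : Set (Fin d)}
    (h : ∀ l : Cell d q, ∀ j ∉ s, l j ≠ 0 → dft d q X (Cell.toInt l) = 0) :
    DependsOn X s := fun m n hmn => by
  rw [← Complex.ofReal_inj, fourier_inversion hX, fourier_inversion hX]
  refine Finset.sum_congr rfl fun l _ => ?_
  by_cases hl : ∃ j ∉ s, l j ≠ 0
  · obtain ⟨j, hj, hlj⟩ := hl
    rw [h l j hj hlj, mul_zero, mul_zero]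
  · push Not at hl
    refine congrArg (· * _) (Finset.prod_congr rfl fun j _ => ?_)
    by_cases hj : j ∈ s
    · rw [hmn j hj]
    · simp [Cell.toInt, hl j hj]

end

end Fourier

section FloquetAtInfinity

variable {d : ℕ} {q : Fin d → ℕ}

/-- The vector `(ρ^1_{n_1}, …, ρ^d_{n_d})`; the `n`-th diagonal entry of the Floquet matrix at `z`
grows like `phase n ⬝ᵥ z`. -/
def phase (n : Cell d q) : Fin d → ℂ := fun j => rho d q j (n j : ℕ)

theorem norm_phase (n : Cell d q) (j : Fin d) : ‖phase n j‖ = 1 := norm_rho j _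

variable [∀ j, NeZero (q j)]

theorem phase_zero : phase (0 : Cell d q) = 1 := funext fun j => rho_zero j

/-- The factors by which the rows of the Floquet matrix at `u⁻¹ w + s e` are multiplied to make it
regular at `u = 0`. -/
def rowScale (u : ℂ) (n : Cell d q) : ℂ := if n = 0 then 1 else u

/-- The diagonal of the rescaled Floquet matrix of the zero potential at `u⁻¹ w + s e`, where
`p = (u, s)`, `∑ w = 0` and `∑ e = 1`. -/
def scaledDiagonal (lam : ℂ) (w e : Fin d → ℂ) (p : ℂ × ℂ) (n : Cell d q) : ℂ :=
  if n = 0 then p.2 + p.1 * ∑ j, (w j + p.1 * p.2 * e j)⁻¹ - lam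
  else ∑ j, phase n j * (w j + p.1 * p.2 * e j) +
    p.1 ^ 2 * ∑ j, (phase n j * (w j + p.1 * p.2 * e j))⁻¹ - p.1 * lam

/-- The Floquet matrix of `X` at `u⁻¹ w + s e` minus `λ`, where `p = (u, s)`, with its rows
rescaled. -/
def scaledFloquetMatrix (X : (Fin d → ℤ) → ℝ) (lam : ℂ) (w e : Fin d → ℂ) (p : ℂ × ℂ) :
    Matrix (Cell d q) (Cell d q) ℂ :=
  diagonal (scaledDiagonal lam w e p) +
    of fun n n' => rowScale p.1 n * dft d q X (Cell.toInt n - Cell.toInt n')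

variable (X : (Fin d → ℤ) → ℝ) (lam : ℂ) {w e : Fin d → ℂ}

theorem scaledDiagonal_eq {u : ℂ} (hu : u ≠ 0) (hw : ∑ j, w j = 0) (he : ∑ j, e j = 1) (s : ℂ)
    (n : Cell d q) : scaledDiagonal lam w e (u, s) n = rowScale u n *
      (∑ j, (phase n j * (u⁻¹ • w + s • e) j + (phase n j * (u⁻¹ • w + s • e) j)⁻¹) - lam) := by
  have hz (j : Fin d) : (u⁻¹ • w + s • e) j = u⁻¹ * (w j + u * s * e j) := by
    simp only [Pi.add_apply, Pi.smul_apply, smul_eq_mul]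
    field_simp
  have hsum : ∑ j, (u⁻¹ • w + s • e) j = s := by
    simp [Finset.sum_add_distrib, ← Finset.mul_sum, hw, he]
  rw [scaledDiagonal, rowScale, Finset.sum_add_distrib]
  split_ifs with hn
  · simp only [hn, phase_zero, Pi.one_apply, one_mul, hsum]
    simp only [hz, mul_inv, inv_inv, ← Finset.mul_sum]
  · simp only [hz, mul_left_comm _ u⁻¹, mul_inv, inv_inv, ← Finset.mul_sum]
    field_simp

theorem scaledFloquetMatrix_eq {u : ℂ} (hu : u ≠ 0) (hw : ∑ j, w j = 0) (he : ∑ j, e j = 1)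
    (s : ℂ) : scaledFloquetMatrix X lam w e (u, s) =
      diagonal (rowScale u) * (floquetMatrix d q X (u⁻¹ • w + s • e) - lam • 1) := by
  ext n n'
  rw [diagonal_mul, scaledFloquetMatrix, Matrix.add_apply, of_apply, diagonal_apply,
    scaledDiagonal_eq lam hu hw he]
  simp only [floquetMatrix, phase, Cell.toInt, Pi.sub_def, Matrix.sub_apply, Matrix.smul_apply,
    one_apply, smul_eq_mul]
  split_ifs <;> ring

theorem det_scaledFloquetMatrix_eq_zero_iff {u : ℂ} (hu : u ≠ 0) (hw : ∑ j, w j = 0)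
    (he : ∑ j, e j = 1) (s : ℂ) : (scaledFloquetMatrix (q := q) X lam w e (u, s)).det = 0 ↔
      floquetDet d q X (u⁻¹ • w + s • e) lam = 0 := by
  have hscale : ∏ n : Cell d q, rowScale u n ≠ 0 :=
    Finset.prod_ne_zero_iff.mpr fun n _ => by unfold rowScale; split_ifs <;> simp [hu]
  rw [scaledFloquetMatrix_eq X lam hu hw he, det_mul, det_diagonal, mul_eq_zero,
    or_iff_right hscale, floquetDet]

theorem contDiffAt_scaledFloquetMatrix (hw : ∀ j, w j ≠ 0) (s : ℂ) (n n' : Cell d q) :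
    ContDiffAt ℂ 1 (fun p => scaledFloquetMatrix X lam w e p n n') (0, s) := by
  have hinv (j : Fin d) : ContDiffAt ℂ 1 (fun p : ℂ × ℂ => (w j + p.1 * p.2 * e j)⁻¹) (0, s) :=
    ContDiffAt.inv (by fun_prop) (by simpa using hw j)
  have hdiag : ContDiffAt ℂ 1 (fun p => scaledDiagonal lam w e p n) (0, s) := by
    simp only [scaledDiagonal, mul_inv]
    split_ifs <;> fun_prop
  have hscale : ContDiffAt ℂ 1 (fun p : ℂ × ℂ => rowScale p.1 n) (0, s) := by
    simp only [rowScale]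
    split_ifs <;> fun_prop
  simp only [scaledFloquetMatrix, Matrix.add_apply, diagonal_apply, of_apply]
  split_ifs <;> fun_prop

theorem scaledFloquetMatrix_apply_zero_zero (p : ℂ × ℂ) :
    scaledFloquetMatrix (q := q) X lam w e p 0 0 =
      p.2 - (lam - dft d q X 0) + p.1 * ∑ j, (w j + p.1 * p.2 * e j)⁻¹ := by
  simp [scaledFloquetMatrix, scaledDiagonal, rowScale]
  ring

theorem scaledFloquetMatrix_apply_zero_left (p : ℂ × ℂ) {n : Cell d q} (hn : n ≠ 0) :
    scaledFloquetMatrix X lam w e p 0 n = conj (dft d q X (Cell.toInt n)) := by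
  simp [scaledFloquetMatrix, rowScale, hn.symm, Cell.toInt_zero, dft_neg]

theorem scaledFloquetMatrix_apply_zero_right (p : ℂ × ℂ) {n : Cell d q} (hn : n ≠ 0) :
    scaledFloquetMatrix X lam w e p n 0 = p.1 * dft d q X (Cell.toInt n) := by
  simp [scaledFloquetMatrix, rowScale, hn, Cell.toInt_zero]

theorem toSquareBlockProp_scaledFloquetMatrix (s : ℂ) :
    (scaledFloquetMatrix X lam w e (0, s)).toSquareBlockProp (· ≠ (0 : Cell d q)) =
      diagonal fun n : {n : Cell d q // n ≠ 0} => phase n.1 ⬝ᵥ w := by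
  ext n m
  simp [toSquareBlockProp_def, scaledFloquetMatrix, scaledDiagonal, rowScale, n.2, diagonal_apply,
    Subtype.ext_iff, dotProduct]

theorem exists_tendsto_eventually_det_scaledFloquetMatrix_eq_zero (hw : ∀ j, w j ≠ 0)
    (hphase : ∀ n : Cell d q, n ≠ 0 → phase n ⬝ᵥ w ≠ 0) :
    ∃ s : ℂ → ℂ, Tendsto s (𝓝 0) (𝓝 (lam - dft d q X 0)) ∧
      ∀ᶠ u in 𝓝 0, (scaledFloquetMatrix (q := q) X lam w e (u, s u)).det = 0 :=
  exists_tendsto_eventually_det_eq_zero (i := 0)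
    (contDiffAt_scaledFloquetMatrix X lam hw _)
    (fun s => by simp [scaledFloquetMatrix_apply_zero_zero])
    (fun s n hn => by simp [scaledFloquetMatrix_apply_zero_right, hn])
    (toSquareBlockProp_scaledFloquetMatrix X lam)
    fun n => hphase n n.2

theorem tendsto_branch (hw : ∀ j, w j ≠ 0)
    (hphase : ∀ n : Cell d q, n ≠ 0 → phase n ⬝ᵥ w ≠ 0) {s : ℂ → ℂ} {s₀ : ℂ}
    (hs : Tendsto s (𝓝[≠] 0) (𝓝 s₀))
    (hdet : ∀ᶠ u in 𝓝[≠] 0, (scaledFloquetMatrix (q := q) X lam w e (u, s u)).det = 0) :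
    Tendsto (fun u => (s u - (lam - dft d q X 0)) / u) (𝓝[≠] 0)
      (𝓝 (∑ n : {n : Cell d q // n ≠ 0},
        (‖dft d q X (Cell.toInt n.1)‖ ^ 2 : ℂ) / (phase n.1 ⬝ᵥ w) - ∑ j, (w j)⁻¹)) := by
  have hus : Tendsto (fun u => (u, s u)) (𝓝[≠] 0) (𝓝 (0, s₀)) :=
    (tendsto_id.mono_left nhdsWithin_le_nhds).prodMk_nhds hs
  have hentry (n n' : Cell d q) :
      Tendsto (fun u => scaledFloquetMatrix X lam w e (u, s u) n n') (𝓝[≠] 0)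
        (𝓝 (scaledFloquetMatrix X lam w e (0, s₀) n n')) :=
    (contDiffAt_scaledFloquetMatrix X lam hw s₀ n n').continuousAt.tendsto.comp hus
  have hblock : Tendsto (fun u =>
      (scaledFloquetMatrix X lam w e (u, s u)).toSquareBlockProp (· ≠ (0 : Cell d q))) (𝓝[≠] 0)
        (𝓝 (diagonal fun n : {n : Cell d q // n ≠ 0} => phase n.1 ⬝ᵥ w)) := by
    rw [← toSquareBlockProp_scaledFloquetMatrix (e := e) X lam s₀]
    exact tendsto_pi_nhds.mpr fun n => tendsto_pi_nhds.mpr fun n' => hentry n n'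
  have hinv : Tendsto (fun u => ∑ j, (w j + u * s u * e j)⁻¹) (𝓝[≠] 0) (𝓝 (∑ j, (w j)⁻¹)) := by
    refine tendsto_finsetSum _ fun j _ => ?_
    have hcont : ContinuousAt (fun p : ℂ × ℂ => (w j + p.1 * p.2 * e j)⁻¹) (0, s₀) :=
      ContinuousAt.inv₀ (by fun_prop) (by simpa using hw j)
    simpa using! hcont.tendsto.comp hus
  have hschur := tendsto_diag_div_of_det_eq_zero (ε := id) hdet
    (r := fun n => conj (dft d q X (Cell.toInt n.1))) (c := fun n => dft d q X (Cell.toInt n.1))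
    (tendsto_pi_nhds.mpr fun n => by
      simp only [scaledFloquetMatrix_apply_zero_left X lam _ n.2, tendsto_const_nhds])
    (tendsto_pi_nhds.mpr fun n => tendsto_nhds_of_eventually_eq <| by
      filter_upwards [self_mem_nhdsWithin] with u hu
      rw [scaledFloquetMatrix_apply_zero_right X lam _ n.2, id, mul_div_cancel_left₀ _ hu])
    hblock fun n => hphase n n.2
  simp only [Complex.conj_mul'] at hschur
  refine (hschur.sub hinv).congr' ?_
  filter_upwards [self_mem_nhdsWithin] with u hu
  rw [scaledFloquetMatrix_apply_zero_zero, id, add_div, mul_div_cancel_left₀ _ hu,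
    add_sub_cancel_right]

end FloquetAtInfinity

section ZeroSum

variable {𝕜 ι : Type*} [Field 𝕜]

theorem exists_eq_smul_of_ker_le {E : Type*} [AddCommGroup E] [Module 𝕜 E] {f g : Module.Dual 𝕜 E}
    (h : LinearMap.ker f ≤ LinearMap.ker g) : ∃ c : 𝕜, g = c • f := by
  have hg := mem_span_of_iInf_ker_le_ker (L := fun _ : Unit => f) (K := g) (by simpa using h)
  rw [Set.range_const, Submodule.mem_span_singleton] at hg
  exact hg.imp fun c hc => hc.symm

variable [Fintype ι] [DecidableEq ι]

variable (𝕜 ι) in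
/-- The hyperplane `∑ w = 0`, the directions in which `z` is sent to infinity. -/
def zeroSum : Submodule 𝕜 (ι → 𝕜) := LinearMap.ker (dotProductEquiv 𝕜 ι 1)

theorem mem_zeroSum {w : ι → 𝕜} : w ∈ zeroSum 𝕜 ι ↔ ∑ j, w j = 0 := by
  simp [zeroSum, one_dotProduct]

/-- The functional `w ↦ x ⬝ᵥ w` on the hyperplane `∑ w = 0`. -/
def zeroSumForm : (ι → 𝕜) →ₗ[𝕜] Module.Dual 𝕜 (zeroSum 𝕜 ι) :=
  (zeroSum 𝕜 ι).dualRestrict ∘ₗ (dotProductEquiv 𝕜 ι).toLinearMap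

theorem zeroSumForm_apply (x : ι → 𝕜) (w : zeroSum 𝕜 ι) : zeroSumForm x w = x ⬝ᵥ w := rfl

theorem zeroSumForm_eq_zero_iff {x : ι → 𝕜} : zeroSumForm x = 0 ↔ ∃ α : 𝕜, x = α • 1 := by
  constructor
  · intro h
    have hker : LinearMap.ker (dotProductEquiv 𝕜 ι 1) ≤ LinearMap.ker (dotProductEquiv 𝕜 ι x) :=
      fun w hw => LinearMap.congr_fun h ⟨w, hw⟩
    obtain ⟨α, hα⟩ := exists_eq_smul_of_ker_le hker
    exact ⟨α, (dotProductEquiv 𝕜 ι).injective (by rw [hα, map_smul])⟩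
  · rintro ⟨α, rfl⟩
    ext w
    rw [zeroSumForm_apply, smul_dotProduct, one_dotProduct, mem_zeroSum.mp w.2, smul_zero,
      LinearMap.zero_apply]

theorem ker_zeroSumForm_le_iff {x y : ι → 𝕜} :
    LinearMap.ker (zeroSumForm y) ≤ LinearMap.ker (zeroSumForm x) ↔
      ∃ α β : 𝕜, x = α • 1 + β • y := by
  have hsub (β : 𝕜) : zeroSumForm x = β • zeroSumForm y ↔ ∃ α : 𝕜, x = α • 1 + β • y := by
    rw [← sub_eq_zero, ← map_smul, ← map_sub, zeroSumForm_eq_zero_iff]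
    simp only [sub_eq_iff_eq_add]
  rw [exists_comm]
  simp only [← hsub]
  refine ⟨exists_eq_smul_of_ker_le, ?_⟩
  rintro ⟨β, hβ⟩
  exact hβ ▸ LinearMap.ker_le_ker_smul _ β

end ZeroSum

section Fermi

variable {d : ℕ} {q : Fin d → ℕ} [∀ j, NeZero (q j)] {V Y : (Fin d → ℤ) → ℝ}

theorem eventually_inv_smul_add_smul_ne_zero {ι : Type*} [Finite ι] {w e : ι → ℂ}
    (hw : ∀ j, w j ≠ 0) {s : ℂ → ℂ} {s₀ : ℂ} (hs : Tendsto s (𝓝[≠] 0) (𝓝 s₀)) :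
    ∀ᶠ u in 𝓝[≠] 0, ∀ j, (u⁻¹ • w + s u • e) j ≠ 0 := by
  have hlim (j : ι) : Tendsto (fun u => w j + u * (s u * e j)) (𝓝[≠] 0) (𝓝 (w j)) := by
    simpa using
      ((tendsto_id.mono_left nhdsWithin_le_nhds).mul (hs.mul_const (e j))).const_add (w j)
  filter_upwards [eventually_all.mpr fun j => (hlim j).eventually_ne (hw j), self_mem_nhdsWithin]
    with u hu hu0 j
  rw [Pi.add_apply, Pi.smul_apply, Pi.smul_apply, smul_eq_mul, smul_eq_mul]
  have hmul := mul_ne_zero (inv_ne_zero hu0) (hu j)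
  rwa [mul_add, inv_mul_cancel_left₀ hu0] at hmul

theorem tendsto_of_tendsto_sub_div {𝕜 : Type*} [NormedField 𝕜] {s : 𝕜 → 𝕜} {a L : 𝕜}
    (h : Tendsto (fun u => (s u - a) / u) (𝓝[≠] 0) (𝓝 L)) : Tendsto s (𝓝[≠] 0) (𝓝 a) := by
  have hmul := (h.mul (tendsto_id.mono_left nhdsWithin_le_nhds)).add_const a
  rw [mul_zero, zero_add] at hmul
  refine hmul.congr' ?_
  filter_upwards [self_mem_nhdsWithin] with u hu
  rw [id, div_mul_cancel₀ _ hu, sub_add_cancel]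

/-- Comparing the asymptotics of a branch of the Fermi variety of `V` with those obtained by viewing
it as a branch of the Fermi variety of `Y`. -/
theorem FermiIsospectral.sum_norm_sq_dft_div_eq [NeZero d] (h : FermiIsospectral d q V Y)
    {w : Fin d → ℂ} (hw : ∀ j, w j ≠ 0) (hw0 : ∑ j, w j = 0)
    (hphase : ∀ n : Cell d q, n ≠ 0 → phase n ⬝ᵥ w ≠ 0) :
    ∑ n : {n : Cell d q // n ≠ 0}, (‖dft d q V (Cell.toInt n.1)‖ ^ 2 : ℂ) / (phase n.1 ⬝ᵥ w) =
      ∑ n : {n : Cell d q // n ≠ 0},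
        (‖dft d q Y (Cell.toInt n.1)‖ ^ 2 : ℂ) / (phase n.1 ⬝ᵥ w) := by
  obtain ⟨lam, h⟩ := h
  set e : Fin d → ℂ := Pi.single 0 1
  have he : ∑ j, e j = 1 := Finset.sum_pi_single' 0 1 _ |>.trans (by simp)
  obtain ⟨s, hs, hV⟩ :=
    exists_tendsto_eventually_det_scaledFloquetMatrix_eq_zero V lam (e := e) hw hphase
  replace hV := hV.filter_mono (nhdsWithin_le_nhds (s := {0}ᶜ))
  replace hs := hs.mono_left (nhdsWithin_le_nhds (s := {0}ᶜ))
  have hY : ∀ᶠ u in 𝓝[≠] 0, (scaledFloquetMatrix (q := q) Y lam w e (u, s u)).det = 0 := by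
    filter_upwards [hV, eventually_inv_smul_add_smul_ne_zero hw hs, self_mem_nhdsWithin]
      with u hu hz hu0
    rw [det_scaledFloquetMatrix_eq_zero_iff _ _ hu0 hw0 he] at hu ⊢
    exact (h.subset ⟨hz, hu⟩).2
  have hVlim := tendsto_branch V lam hw hphase hs hV
  have hYlim := tendsto_branch Y lam hw hphase hs hY
  have hmean : dft d q V 0 = dft d q Y 0 := sub_right_injective <|
    tendsto_nhds_unique hs (tendsto_of_tendsto_sub_div hYlim)
  rw [hmean] at hVlim
  exact sub_left_injective (tendsto_nhds_unique hVlim hYlim)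

end Fermi

section Coprime

variable {d : ℕ} {q : Fin d → ℕ} [∀ j, NeZero (q j)]

theorem phase_eq_one_iff {n : Cell d q} {j : Fin d} : phase n j = 1 ↔ n j = 0 := by
  rw [← (rho_fin_injective j).eq_iff (a := n j), ← rho_zero (q := q) j]
  simp [phase]

theorem phase_injective : Function.Injective (phase (q := q)) := fun _ _ h =>
  funext fun j => rho_fin_injective j (congrFun h j)

theorem phase_eq_phase_iff (hq : Pairwise (Function.onFun Nat.Coprime q))
    {n : Cell d q} {i j : Fin d} (hij : i ≠ j) :
    phase n i = phase n j ↔ n i = 0 ∧ n j = 0 := by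
  refine ⟨fun h => ⟨?_, ?_⟩, fun h => ?_⟩
  · exact phase_eq_one_iff.mp (rho_eq_one_of_eq_of_coprime (hq hij) h)
  · exact phase_eq_one_iff.mp (rho_eq_one_of_eq_of_coprime (hq hij.symm) h.symm)
  · rw [phase_eq_one_iff.mpr h.1, phase_eq_one_iff.mpr h.2]

theorem eq_one_of_forall_eq_rho (hq : Pairwise (Function.onFun Nat.Coprime q))
    [Nontrivial (Fin d)] {β : ℂ} (m : Fin d → ℤ)
    (h : ∀ j, rho d q j (m j) = β) : β = 1 := by
  obtain ⟨i, j, hij⟩ := exists_pair_ne (Fin d)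
  rw [← h i]
  exact rho_eq_one_of_eq_of_coprime (hq hij) ((h i).trans (h j).symm)

theorem eq_zero_of_phase_eq_smul_one (hq : Pairwise (Function.onFun Nat.Coprime q))
    [Nontrivial (Fin d)] {n : Cell d q} {α : ℂ}
    (h : phase n = α • 1) : n = 0 := by
  have hα : α = 1 := eq_one_of_forall_eq_rho hq (Cell.toInt n) fun j => by
    simpa using! congrFun h j
  rw [hα, one_smul, ← phase_zero (q := q)] at h
  exact phase_injective h

theorem eq_of_phase_eq_smul (hq : Pairwise (Function.onFun Nat.Coprime q))
    [Nontrivial (Fin d)] {n l : Cell d q} {β : ℂ}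
    (h : phase n = β • phase l) : n = l := by
  have hβ : β = 1 := eq_one_of_forall_eq_rho hq (Cell.toInt n - Cell.toInt l) fun j => by
    rw [Pi.sub_apply, sub_eq_add_neg, rho_add, rho_neg]
    exact (mul_inv_eq_iff_eq_mul₀ (rho_ne_zero j _)).mpr (congrFun h j)
  rw [hβ, one_smul] at h
  exact phase_injective h

/-- The phases of `l` along three coordinates are distinct points of the unit circle, and an affine
map taking three points of the circle into the circle is constant or a rotation. -/
theorem phase_eq_affine_iff_eq (hq : Pairwise (Function.onFun Nat.Coprime q))
    (hd : 3 ≤ d) {n l : Cell d q} {i j : Fin d} (hij : i ≠ j)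
    (hi : l i ≠ 0) (hj : l j ≠ 0) (hn : n ≠ 0) :
    (∃ α β : ℂ, phase n = α • 1 + β • phase l) ↔ n = l := by
  refine ⟨?_, fun h => ⟨0, 1, by simp [h]⟩⟩
  rintro ⟨α, β, h⟩
  have : Nontrivial (Fin d) := ⟨i, j, hij⟩
  obtain ⟨k, hki, hkj⟩ := Fin.exists_ne_and_ne_of_two_lt i j hd
  have hnorm (a : Fin d) : ‖α + β * phase l a‖ = 1 := by
    rw [← norm_phase n a]
    simpa using congrArg norm (congrFun h a).symm
  rcases eq_zero_or_eq_zero_of_norm_add_mul_eq_one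
    (fun hphase => hi ((phase_eq_phase_iff hq hij).mp hphase).1)
    (fun hphase => hi ((phase_eq_phase_iff hq hki.symm).mp hphase).1)
    (fun hphase => hj ((phase_eq_phase_iff hq hkj.symm).mp hphase).1)
    (norm_phase l i) (norm_phase l j) (norm_phase l k) (hnorm i) (hnorm j) (hnorm k) with hα | hβ
  · exact eq_of_phase_eq_smul hq (by simpa [hα] using h)
  · exact absurd (eq_zero_of_phase_eq_smul_one hq (by simpa [hβ] using h)) hn

theorem phase_eq_affine_iff_forall_eq_zero (hq : Pairwise (Function.onFun Nat.Coprime q))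
    (hd : 3 ≤ d) {n l : Cell d q} {i : Fin d} (hi : l i ≠ 0)
    (hl : ∀ j ≠ i, l j = 0) :
    (∃ α β : ℂ, phase n = α • 1 + β • phase l) ↔ ∀ j ≠ i, n j = 0 := by
  constructor
  · rintro ⟨α, β, h⟩ j hj
    obtain ⟨k, hki, hkj⟩ := Fin.exists_ne_and_ne_of_two_lt i j hd
    have hval (a : Fin d) (ha : a ≠ i) : phase n a = α + β := by
      simp [h, phase_eq_one_iff.mpr (hl a ha)]
    exact ((phase_eq_phase_iff hq hkj.symm).mp ((hval j hj).trans (hval k hki).symm)).1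
  · intro hn
    have hne : phase l i - 1 ≠ 0 := sub_ne_zero.mpr (mt phase_eq_one_iff.mp hi)
    refine ⟨1 - (phase n i - 1) / (phase l i - 1), (phase n i - 1) / (phase l i - 1), ?_⟩
    ext j
    simp only [Pi.add_apply, Pi.smul_apply, Pi.one_apply, smul_eq_mul]
    rcases eq_or_ne j i with rfl | hj
    · field_simp
      ring
    · rw [phase_eq_one_iff.mpr (hl j hj), phase_eq_one_iff.mpr (hn j hj)]
      ring

end Coprime

section Poles

variable {d : ℕ} {q : Fin d → ℕ} [∀ j, NeZero (q j)]

/-- The functionals on the hyperplane `∑ w = 0` that must not vanish at a direction `w` for the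
Fermi variety to have a nondegenerate branch there. -/
def poleForm : {n : Cell d q // n ≠ 0} ⊕ Fin d → Module.Dual ℂ (zeroSum ℂ (Fin d)) :=
  Sum.elim (fun n => zeroSumForm (phase n.1)) fun j => zeroSumForm (Pi.single j 1)

theorem poleForm_inl_apply (n : {n : Cell d q // n ≠ 0}) (w : zeroSum ℂ (Fin d)) :
    poleForm (.inl n) w = phase n.1 ⬝ᵥ w := rfl

theorem poleForm_inr_apply (j : Fin d) (w : zeroSum ℂ (Fin d)) :
    poleForm (q := q) (.inr j) w = w.1 j := single_one_dotProduct j w.1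

theorem exists_forall_poleForm_ne_zero [Nontrivial (Fin d)]
    (hq : Pairwise (Function.onFun Nat.Coprime q)) :
    ∃ v, ∀ i, poleForm (q := q) i v ≠ 0 := by
  refine Module.Dual.exists_forall_ne_zero_of_forall_exists _ fun i => ?_
  suffices poleForm (q := q) i ≠ 0 by
    contrapose! this
    exact LinearMap.ext this
  rcases i with n | j <;> rw [poleForm] <;> refine mt zeroSumForm_eq_zero_iff.mp ?_
  · rintro ⟨α, hα⟩
    exact n.2 (eq_zero_of_phase_eq_smul_one hq hα)
  · rintro ⟨α, hα⟩
    obtain ⟨k, hk⟩ := exists_ne j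
    have hα0 : α = 0 := by simpa [hk] using (congrFun hα k).symm
    simpa [hα0] using congrFun hα j

variable {V Y : (Fin d → ℤ) → ℝ}

open Classical in
/-- The residue along the hyperplane where `phase l ⬝ᵥ w` vanishes. -/
theorem FermiIsospectral.sum_affine_eq_zero [NeZero d] (h : FermiIsospectral d q V Y)
    (l : {n : Cell d q // n ≠ 0}) {v : zeroSum ℂ (Fin d)}
    (hv : ∀ i, poleForm (q := q) i v ≠ 0) :
    ∑ n : {n : Cell d q // n ≠ 0} with ∃ α β : ℂ, phase n.1 = α • 1 + β • phase l.1,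
      (‖dft d q V (Cell.toInt n.1)‖ ^ 2 - ‖dft d q Y (Cell.toInt n.1)‖ ^ 2 : ℂ) /
        (phase n.1 ⬝ᵥ v) = 0 := by
  set c : {n : Cell d q // n ≠ 0} ⊕ Fin d → ℂ := Sum.elim
    (fun n => ‖dft d q V (Cell.toInt n.1)‖ ^ 2 - ‖dft d q Y (Cell.toInt n.1)‖ ^ 2) 0
  have hsum (w : zeroSum ℂ (Fin d)) (hw : ∀ i, poleForm (q := q) i w ≠ 0) :
      ∑ i, c i / poleForm i w = 0 := by
    have hkey := h.sum_norm_sq_dft_div_eq (w := w)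
      (fun j => poleForm_inr_apply (q := q) j w ▸ hw (.inr j)) (mem_zeroSum.mp w.2)
      fun n hn => hw (.inl ⟨n, hn⟩)
    simpa [c, poleForm_inl_apply, sub_div] using sub_eq_zero.mpr hkey
  have hres := sum_div_eq_zero_of_ker_le hsum (.inl l) hv
  rw [Finset.sum_filter, Fintype.sum_sum_type] at hres
  rw [Finset.sum_filter]
  simpa [c, poleForm, ker_zeroSumForm_le_iff, zeroSumForm_apply] using hres

end Poles

section Rigidity

variable {d : ℕ} {q : Fin d → ℕ} [∀ j, NeZero (q j)] {V Y : (Fin d → ℤ) → ℝ}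

theorem FermiIsospectral.norm_dft_eq (h : FermiIsospectral d q V Y) (hd : 3 ≤ d)
    (hq : Pairwise (Function.onFun Nat.Coprime q)) {l : Cell d q} {i j : Fin d} (hij : i ≠ j)
    (hi : l i ≠ 0) (hj : l j ≠ 0) : ‖dft d q V (Cell.toInt l)‖ = ‖dft d q Y (Cell.toInt l)‖ := by
  have : NeZero d := ⟨by lia⟩
  have : Nontrivial (Fin d) := ⟨i, j, hij⟩
  have hl : l ≠ 0 := fun hl => hi (congrFun hl i)
  obtain ⟨v, hv⟩ := exists_forall_poleForm_ne_zero hq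
  have hphase : phase l ⬝ᵥ v ≠ 0 := hv (.inl ⟨l, hl⟩)
  have hres := h.sum_affine_eq_zero ⟨l, hl⟩ hv
  rw [Finset.sum_filter, Finset.sum_eq_single ⟨l, hl⟩, if_pos ⟨0, 1, by simp⟩, div_eq_zero_iff,
    or_iff_left hphase, sub_eq_zero] at hres
  · exact (pow_left_inj₀ (norm_nonneg _) (norm_nonneg _) two_ne_zero).mp (by exact_mod_cast hres)
  · intro n _ hnl
    rw [if_neg]
    rw [phase_eq_affine_iff_eq hq hd hij hi hj n.2]
    simpa [Subtype.ext_iff] using hnl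
  · simp

/-- The nonzero points of the fundamental domain on the `i`-th coordinate axis. -/
def axis (i : Fin d) : Finset {n : Cell d q // n ≠ 0} := {n | ∀ j ≠ i, n.1 j = 0}

theorem mem_axis {n : {n : Cell d q // n ≠ 0}} {i : Fin d} :
    n ∈ axis i ↔ ∀ j ≠ i, n.1 j = 0 := by simp [axis]

theorem apply_ne_zero_of_mem_axis {n : {n : Cell d q // n ≠ 0}} {i : Fin d} (hn : n ∈ axis i) :
    n.1 i ≠ 0 := fun hni =>
  n.2 (funext fun j => if hj : j = i then hj ▸ hni else mem_axis.mp hn j hj)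

theorem phase_dotProduct_of_mem_axis {n : {n : Cell d q // n ≠ 0}} {i : Fin d} (hn : n ∈ axis i)
    {v : Fin d → ℂ} (hv : ∑ j, v j = 0) : phase n.1 ⬝ᵥ v = (phase n.1 i - 1) * v i := by
  rw [← sub_zero (phase n.1 ⬝ᵥ v), ← hv, dotProduct, ← Finset.sum_sub_distrib,
    Finset.sum_eq_single i
      (fun j _ hj => by rw [phase_eq_one_iff.mpr (mem_axis.mp hn j hj)]; ring) (by simp)]
  ring

theorem FermiIsospectral.sum_axis_div_eq_zero (h : FermiIsospectral d q V Y) (hd : 3 ≤ d)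
    (hq : Pairwise (Function.onFun Nat.Coprime q)) (i : Fin d) :
    ∑ n ∈ axis (q := q) i,
      (‖dft d q V (Cell.toInt n.1)‖ ^ 2 - ‖dft d q Y (Cell.toInt n.1)‖ ^ 2 : ℂ) /
        (phase n.1 i - 1) = 0 := by
  classical
  rcases (axis (q := q) i).eq_empty_or_nonempty with hempty | ⟨l, hl⟩
  · simp [hempty]
  have : NeZero d := ⟨by lia⟩
  have : Nontrivial (Fin d) := Fin.nontrivial_iff_two_le.mpr (by lia)
  obtain ⟨v, hv⟩ := exists_forall_poleForm_ne_zero hq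
  have hvi : v.1 i ≠ 0 := poleForm_inr_apply (q := q) i v ▸ hv (.inr i)
  have hclass (n : {n : Cell d q // n ≠ 0}) :
      (∃ α β : ℂ, phase n.1 = α • 1 + β • phase l.1) ↔ n ∈ axis i := by
    rw [mem_axis, phase_eq_affine_iff_forall_eq_zero hq hd (apply_ne_zero_of_mem_axis hl)
      (mem_axis.mp hl)]
  have hres := h.sum_affine_eq_zero l hv
  simp only [hclass, Finset.filter_univ_mem] at hres
  refine (div_eq_zero_iff.mp ?_).resolve_right hvi
  rw [Finset.sum_div, ← hres]
  refine Finset.sum_congr rfl fun n hn => ?_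
  rw [phase_dotProduct_of_mem_axis hn (mem_zeroSum.mp v.2), div_div]

/-- The real part of `1 / (x - 1)` is the same for all `x ≠ 1` of modulus one. -/
theorem FermiIsospectral.sum_axis_norm_sq_dft_eq (h : FermiIsospectral d q V Y) (hd : 3 ≤ d)
    (hq : Pairwise (Function.onFun Nat.Coprime q)) (i : Fin d) :
    ∑ n ∈ axis (q := q) i, ‖dft d q V (Cell.toInt n.1)‖ ^ 2 =
      ∑ n ∈ axis (q := q) i, ‖dft d q Y (Cell.toInt n.1)‖ ^ 2 := by
  have hre : ∑ n ∈ axis (q := q) i, (‖dft d q V (Cell.toInt n.1)‖ ^ 2 -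
      ‖dft d q Y (Cell.toInt n.1)‖ ^ 2) * (-1 / 2) = 0 := by
    rw [← Complex.zero_re, ← h.sum_axis_div_eq_zero hd hq i, Complex.re_sum]
    refine Finset.sum_congr rfl fun n hn => ?_
    rw [div_eq_mul_inv (_ - _), ← re_inv_sub_one_of_norm_eq_one (norm_phase n.1 i)
      (mt phase_eq_one_iff.mp (apply_ne_zero_of_mem_axis hn)), ← Complex.re_ofReal_mul]
    push_cast
    rfl
  rw [← Finset.sum_mul, mul_eq_zero_iff_right (by norm_num), Finset.sum_sub_distrib] at hre
  exact sub_eq_zero.mp hre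

end Rigidity

theorem dependsOn_range_iff {ι κ α β : Type*} [Nonempty β] {f : (ι → α) → β} {g : κ → ι} :
    DependsOn f (Set.range g) ↔ ∃ f' : (κ → α) → β, ∀ n, f n = f' fun k => n (g k) := by
  have hfactors : DependsOn f (Set.range g) ↔ f.FactorsThrough fun n k => n (g k) := by
    simp only [DependsOn, Function.FactorsThrough, Set.forall_mem_range, funext_iff]
  rw [hfactors, Function.factorsThrough_iff]
  simp only [funext_iff, Function.comp_apply]

theorem fermi_isospectral_depends_on_first_variables_general {d : ℕ} (hd : 3 ≤ d) {q : Fin d → ℕ}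
    [∀ j, NeZero (q j)] (hq : Pairwise (Function.onFun Nat.Coprime q)) {V Y : (Fin d → ℤ) → ℝ}
    (hV : IsPeriodicPotential d q V) (hY : IsPeriodicPotential d q Y)
    (h : FermiIsospectral d q V Y) {s : Set (Fin d)} (hs : DependsOn Y s) : DependsOn V s := by
  refine dependsOn_of_dft_eq_zero hV fun l j hj hlj => ?_
  have hYzero (n : Cell d q) (hn : n j ≠ 0) : dft d q Y (Cell.toInt n) = 0 :=
    dft_eq_zero_of_dependsOn hY hs hj (mt Cell.dvd_toInt_iff.mp hn)
  by_cases haxis : ∀ i ≠ j, l i = 0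
  · have hsum : ∑ n ∈ axis (q := q) j, ‖dft d q V (Cell.toInt n.1)‖ ^ 2 = 0 := by
      rw [h.sum_axis_norm_sq_dft_eq hd hq]
      exact Finset.sum_eq_zero fun n hn => by simp [hYzero n.1 (apply_ne_zero_of_mem_axis hn)]
    rw [Finset.sum_eq_zero_iff_of_nonneg fun n _ => sq_nonneg _] at hsum
    have hl : l ≠ 0 := fun hl => hlj (congrFun hl j)
    simpa using hsum ⟨l, hl⟩ (mem_axis.mpr haxis)
  · push Not at haxis
    obtain ⟨i, hij, hli⟩ := haxis
    rw [← norm_eq_zero, h.norm_dft_eq hd hq hij hli hlj, hYzero l hlj, norm_zero]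

/-- Theorem 1.7: if `V` and `Y` are Fermi isospectral and `Y` only depends
on the first `d̃` variables (`d̃ < d`), then `V` only depends on the first `d̃` variables. -/
theorem fermi_isospectral_depends_on_first_variables
    (d : ℕ) (hd : 3 ≤ d)
    (q : Fin d → ℕ) (hq : ∀ j, 0 < q j)
    (hco : ∀ i j : Fin d, i ≠ j → Nat.Coprime (q i) (q j))
    (V Y : (Fin d → ℤ) → ℝ)
    (hVper : IsPeriodicPotential d q V) (hYper : IsPeriodicPotential d q Y)
    (hFermi : FermiIsospectral d q V Y)
    (dt : ℕ) (hdt : dt < d)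
    (hY : ∃ Yt : (Fin dt → ℤ) → ℝ,
      ∀ n : Fin d → ℤ, Y n = Yt (fun i => n (Fin.castLE hdt.le i))) :
    ∃ Vt : (Fin dt → ℤ) → ℝ,
      ∀ n : Fin d → ℤ, V n = Vt (fun i => n (Fin.castLE hdt.le i)) := by
  have : ∀ j, NeZero (q j) := fun j => ⟨(hq j).ne'⟩
  exact dependsOn_range_iff.mp <| fermi_isospectral_depends_on_first_variables_general hd
    (fun i j => hco i j) hVper hYper hFermi (dependsOn_range_iff.mpr hY)

end
end
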